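/- arXiv:2206.00828 — 9 statements merged into one kernel-verified Lean document; each statement's English description precedes it below -/
import Mathlib

section
/- Let V* be a real constant, κ > 0 a constant, and q : [0,∞) → ℝ a function with q(t) ≥ 0 for all t ≥ 0. Let V : [0,∞) → ℝ be differentiable and satisfy, for all t ≥ 0: V'(t) = −κ·(V(t) − V*) whenever V(t) ≤ V*, and V'(t) = −(1 − exp(−(V(t) − V*)))·q(t) whenever V(t) > V*. Then the function W(t) := (1/2)·(V(t) − V*)² is nonincreasing on [0,∞); in particular |V(t) − V*| ≤ |V(0) − V*| for all t ≥ 0, i.e., the equilibrium V* is Lyapunov stable. -/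
theorem antitoneOn_dist_of_inner_deriv_nonpos {E : Type*} [NormedAddCommGroup E]
    [InnerProductSpace ℝ E] {D : Set ℝ} (hD : Convex ℝ D) {x : ℝ → E} {c : E}
    (hx : ContinuousOn x D) (hx' : DifferentiableOn ℝ x (interior D))
    (hinner : ∀ t ∈ interior D, inner ℝ (x t - c) (deriv x t) ≤ 0) :
    AntitoneOn (fun t => dist (x t) c) D := by
  have hderiv : ∀ t ∈ interior D,
      HasDerivAt (fun s => ‖x s - c‖ ^ 2) (2 * inner ℝ (x t - c) (deriv x t)) t := fun t ht =>
    ((hx'.differentiableAt (isOpen_interior.mem_nhds ht)).hasDerivAt.sub_const c).norm_sq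
  have hsq : AntitoneOn (fun t => ‖x t - c‖ ^ 2) D :=
    antitoneOn_of_hasDerivWithinAt_nonpos hD ((hx.sub continuousOn_const).norm.pow 2)
      (fun t ht => (hderiv t ht).hasDerivWithinAt)
      (fun t ht => mul_nonpos_of_nonneg_of_nonpos zero_le_two (hinner t ht))
  intro s hs t ht hst
  simp only [dist_eq_norm]
  exact le_of_sq_le_sq (hsq hs ht hst) (norm_nonneg _)

theorem antitoneOn_abs_sub_of_sub_mul_deriv_nonpos {D : Set ℝ} (hD : Convex ℝ D) {x : ℝ → ℝ}
    {c : ℝ} (hx : ContinuousOn x D) (hx' : DifferentiableOn ℝ x (interior D))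
    (hmul : ∀ t ∈ interior D, (x t - c) * deriv x t ≤ 0) :
    AntitoneOn (fun t => |x t - c|) D :=
  antitoneOn_dist_of_inner_deriv_nonpos hD hx hx' fun t ht =>
    (real_inner_comm _ _).trans_le (hmul t ht)

theorem mul_one_sub_exp_neg_nonneg (x : ℝ) : 0 ≤ x * (1 - Real.exp (-x)) := by
  rcases le_total 0 x with hx | hx
  · exact mul_nonneg hx (sub_nonneg.2 (Real.exp_le_one_iff.2 (neg_nonpos.2 hx)))
  · exact mul_nonneg_of_nonpos_of_nonpos hx
      (sub_nonpos.2 (Real.one_le_exp (neg_nonneg.2 hx)))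

/-- Proposition 2 (Lyapunov stability part): the Lyapunov function
`W(t) = (1/2)(V(t) − V*)²` is nonincreasing along the closed-loop
storage-volume dynamics, hence `|V(t) − V*| ≤ |V(0) − V*|`. -/
theorem storage_volume_lyapunov_stable
    (Vstar κ : ℝ) (hκ : 0 < κ)
    (q : ℝ → ℝ) (hq : ∀ t ≥ (0:ℝ), 0 ≤ q t)
    (V : ℝ → ℝ)
    (hdiff : ∀ t ≥ (0:ℝ), DifferentiableAt ℝ V t)
    (hode1 : ∀ t ≥ (0:ℝ), V t ≤ Vstar → deriv V t = -κ * (V t - Vstar))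
    (hode2 : ∀ t ≥ (0:ℝ), Vstar < V t →
      deriv V t = -(1 - Real.exp (-(V t - Vstar))) * q t) :
    AntitoneOn (fun t => (1/2) * (V t - Vstar)^2) (Set.Ici (0:ℝ)) ∧
    ∀ t ≥ (0:ℝ), |V t - Vstar| ≤ |V 0 - Vstar| := by
  have hdissipative : ∀ t ≥ (0 : ℝ), (V t - Vstar) * deriv V t ≤ 0 := by
    intro t ht
    rcases le_or_gt (V t) Vstar with hle | hgt
    · rw [hode1 t ht hle]
      linarith [mul_nonneg hκ.le (sq_nonneg (V t - Vstar))]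
    · rw [hode2 t ht hgt]
      linarith [mul_nonneg (mul_one_sub_exp_neg_nonneg (V t - Vstar)) (hq t ht)]
  have hdiffOn : DifferentiableOn ℝ V (Set.Ici 0) := fun t ht =>
    (hdiff t ht).differentiableWithinAt
  have habs : AntitoneOn (fun t => |V t - Vstar|) (Set.Ici 0) :=
    antitoneOn_abs_sub_of_sub_mul_deriv_nonpos (convex_Ici 0) hdiffOn.continuousOn
      (hdiffOn.mono interior_subset) fun t ht => hdissipative t (interior_subset ht)
  refine ⟨fun s hs t ht hst => ?_, fun t ht => habs Set.self_mem_Ici ht ht⟩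
  exact mul_le_mul_of_nonneg_left (sq_le_sq.2 (habs hs ht hst)) one_half_pos.le
end

section
/- Let V* be a real constant, κ > 0 and c > 0 constants, and q : [0,∞) → ℝ a continuous function with q(t) ≥ c for all t ≥ 0. Let V : [0,∞) → ℝ be differentiable and satisfy, for all t ≥ 0: V'(t) = −κ·(V(t) − V*) whenever V(t) ≤ V*, and V'(t) = −(1 − exp(−(V(t) − V*)))·q(t) whenever V(t) > V*. Then V(t) → V* as t → ∞ (asymptotic stability of the volume setpoint when the outgoing flow is strictly positive). -/
open Filter

/-!
Fix a level `b ≠ V*`. While `V` lies beyond `b`, it moves towards `V*` at a speed bounded away from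
zero: at least `(1 - exp (-(b - V*))) * c` if `b > V*`, and at least `κ * (V* - b)` if `b < V*`.
Hence `V` reaches `b` in finite time, and since its derivative at the level `b` points towards `V*`,
it can never cross back.
-/

section DerivBounds

variable {f : ℝ → ℝ} {b δ : ℝ}

theorem tendsto_atBot_of_deriv_le_neg (hδ : 0 < δ)
    (hf : ∀ᶠ t in atTop, DifferentiableAt ℝ f t) (hf' : ∀ᶠ t in atTop, deriv f t ≤ -δ) :
    Tendsto f atTop atBot := by
  obtain ⟨T, hT⟩ := eventually_atTop.mp (hf.and hf')
  have hcont : ContinuousOn f (Set.Ici T) :=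
    fun t ht ↦ (hT t ht).1.continuousAt.continuousWithinAt
  have hdiff : DifferentiableOn ℝ f (interior (Set.Ici T)) :=
    fun t ht ↦ (hT t (interior_subset ht)).1.differentiableWithinAt
  have hbound : ∀ t ≥ T, f t ≤ f T + -δ * (t - T) := fun t ht ↦ by
    have := (convex_Ici T).image_sub_le_mul_sub_of_deriv_le hcont hdiff
      (fun s hs ↦ (hT s (interior_subset hs)).2) T Set.self_mem_Ici t ht ht
    linarith
  have hline : Tendsto (fun t ↦ f T + -δ * (t - T)) atTop atBot :=
    tendsto_atBot_add_const_left _ _ <|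
      (tendsto_atTop_add_const_right _ (-T) tendsto_id).const_mul_atTop_of_neg (neg_neg_of_pos hδ)
  exact tendsto_atBot_mono' atTop (eventually_atTop.mpr ⟨T, hbound⟩) hline

theorem le_of_deriv_neg_of_eq {T t : ℝ}
    (hf : ∀ s ≥ T, DifferentiableAt ℝ f s) (hf' : ∀ s ≥ T, f s = b → deriv f s < 0)
    (hT : f T ≤ b) (ht : T ≤ t) : f t ≤ b :=
  image_le_of_deriv_right_lt_deriv_boundary (B := fun _ ↦ b) (B' := 0)
    (fun s hs ↦ (hf s hs.1).continuousAt.continuousWithinAt)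
    (fun s hs ↦ (hf s hs.1).hasDerivAt.hasDerivWithinAt)
    hT (fun s ↦ hasDerivAt_const s b) (fun s hs ↦ hf' s hs.1) ⟨ht, le_rfl⟩

theorem eventually_le_of_deriv_le_neg (hδ : 0 < δ)
    (hf : ∀ᶠ t in atTop, DifferentiableAt ℝ f t)
    (hf' : ∀ᶠ t in atTop, b ≤ f t → deriv f t ≤ -δ) : ∀ᶠ t in atTop, f t ≤ b := by
  have hreach : ∃ᶠ t in atTop, f t ≤ b := by
    intro hstay
    have habove : ∀ᶠ t in atTop, b < f t := hstay.mono fun t ↦ lt_of_not_ge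
    have hbot : Tendsto f atTop atBot := tendsto_atBot_of_deriv_le_neg hδ hf <| by
      filter_upwards [hf', habove] with t ht hbt using ht hbt.le
    obtain ⟨t, hle, hlt⟩ := ((hbot.eventually_le_atBot b).and habove).exists
    exact hle.not_gt hlt
  obtain ⟨T, hTb, hT⟩ :=
    (hreach.and_eventually (eventually_forall_ge_atTop.mpr (hf.and hf'))).exists
  filter_upwards [eventually_ge_atTop T] with t ht
  refine le_of_deriv_neg_of_eq (fun s hs ↦ (hT s hs).1) (fun s hs hsb ↦ ?_) hTb ht
  exact ((hT s hs).2 hsb.ge).trans_lt (neg_neg_of_pos hδ)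

theorem eventually_ge_of_le_deriv (hδ : 0 < δ)
    (hf : ∀ᶠ t in atTop, DifferentiableAt ℝ f t)
    (hf' : ∀ᶠ t in atTop, f t ≤ b → δ ≤ deriv f t) : ∀ᶠ t in atTop, b ≤ f t := by
  have hneg : ∀ᶠ t in atTop, (-f) t ≤ -b := by
    refine eventually_le_of_deriv_le_neg hδ (hf.mono fun t ht ↦ ht.neg) (hf'.mono fun t ht hbt ↦ ?_)
    rw [deriv.neg]
    exact neg_le_neg (ht (neg_le_neg_iff.mp hbt))
  exact hneg.mono fun t ↦ neg_le_neg_iff.mp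

theorem tendsto_of_deriv_le_neg_above_of_le_deriv_below {x : ℝ}
    (hf : ∀ᶠ t in atTop, DifferentiableAt ℝ f t)
    (habove : ∀ b > x, ∃ δ > 0, ∀ᶠ t in atTop, b ≤ f t → deriv f t ≤ -δ)
    (hbelow : ∀ b < x, ∃ δ > 0, ∀ᶠ t in atTop, f t ≤ b → δ ≤ deriv f t) :
    Tendsto f atTop (nhds x) := by
  refine tendsto_order.mpr ⟨fun a ha ↦ ?_, fun a ha ↦ ?_⟩
  · obtain ⟨b, hab, hbx⟩ := exists_between ha
    obtain ⟨δ, hδ, hf'⟩ := hbelow b hbx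
    exact (eventually_ge_of_le_deriv hδ hf hf').mono fun t ↦ hab.trans_le
  · obtain ⟨b, hxb, hba⟩ := exists_between ha
    obtain ⟨δ, hδ, hf'⟩ := habove b hxb
    exact (eventually_le_of_deriv_le_neg hδ hf hf').mono fun t ht ↦ ht.trans_lt hba

end DerivBounds

theorem storage_volume_asymptotically_stable_general
    (Vstar κ c : ℝ) (hκ : 0 < κ) (hc : 0 < c)
    (q : ℝ → ℝ) (hq : ∀ t ≥ (0 : ℝ), c ≤ q t)
    (V : ℝ → ℝ)
    (hdiff : ∀ t ≥ (0 : ℝ), DifferentiableAt ℝ V t)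
    (hode1 : ∀ t ≥ (0 : ℝ), V t ≤ Vstar → deriv V t = -κ * (V t - Vstar))
    (hode2 : ∀ t ≥ (0 : ℝ), Vstar < V t →
      deriv V t = -(1 - Real.exp (-(V t - Vstar))) * q t) :
    Tendsto V atTop (nhds Vstar) := by
  refine tendsto_of_deriv_le_neg_above_of_le_deriv_below
    ((eventually_ge_atTop 0).mono hdiff) (fun b hb ↦ ?_) (fun b hb ↦ ?_)
  · have hfactor : 0 < 1 - Real.exp (-(b - Vstar)) :=
      sub_pos.mpr (Real.exp_lt_one_iff.mpr (neg_neg_of_pos (sub_pos.mpr hb)))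
    refine ⟨(1 - Real.exp (-(b - Vstar))) * c, mul_pos hfactor hc, ?_⟩
    filter_upwards [eventually_ge_atTop 0] with t ht hbV
    have hfactor_le : 1 - Real.exp (-(b - Vstar)) ≤ 1 - Real.exp (-(V t - Vstar)) := by gcongr
    calc deriv V t = -((1 - Real.exp (-(V t - Vstar))) * q t) := by
          rw [hode2 t ht (hb.trans_le hbV), neg_mul]
      _ ≤ -((1 - Real.exp (-(b - Vstar))) * c) :=
          neg_le_neg (mul_le_mul hfactor_le (hq t ht) hc.le (hfactor.le.trans hfactor_le))
  · refine ⟨κ * (Vstar - b), mul_pos hκ (sub_pos.mpr hb), ?_⟩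
    filter_upwards [eventually_ge_atTop 0] with t ht hVb
    calc κ * (Vstar - b) ≤ κ * (Vstar - V t) := by gcongr
      _ = deriv V t := by rw [hode1 t ht (hVb.trans hb.le)]; ring

/-- Proposition 2 (asymptotic stability part): with outgoing flow uniformly
bounded below by `c > 0`, the storage volume converges to its setpoint. -/
theorem storage_volume_asymptotically_stable
    (Vstar κ c : ℝ) (hκ : 0 < κ) (hc : 0 < c)
    (q : ℝ → ℝ) (hqcont : ContinuousOn q (Set.Ici (0:ℝ)))
    (hq : ∀ t ≥ (0:ℝ), c ≤ q t)
    (V : ℝ → ℝ)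
    (hdiff : ∀ t ≥ (0:ℝ), DifferentiableAt ℝ V t)
    (hode1 : ∀ t ≥ (0:ℝ), V t ≤ Vstar → deriv V t = -κ * (V t - Vstar))
    (hode2 : ∀ t ≥ (0:ℝ), Vstar < V t →
      deriv V t = -(1 - Real.exp (-(V t - Vstar))) * q t) :
    Tendsto V atTop (nhds Vstar) :=
  storage_volume_asymptotically_stable_general Vstar κ c hκ hc q hq V hdiff hode1 hode2
end

section
/- Let T* be a real constant and φ > 0. Let T_p : [0,∞) → ℝ satisfy |T_p(t) − T*| ≤ φ for all t ≥ 0, let q : [0,∞) → ℝ satisfy q(t) ≥ 0 for all t ≥ 0, and let V : [0,∞) → ℝ satisfy V(t) > 0 for all t ≥ 0. Let T_sh : [0,∞) → ℝ be differentiable with V(t) · T_sh'(t) = q(t) · (T_p(t) − T_sh(t)) for all t ≥ 0. If |T_sh(0) − T*| ≤ φ, then |T_sh(t) − T*| ≤ φ for all t ≥ 0. -/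
/-!
The equation says that `T_sh` relaxes towards `T_p` at the rate `k = q / V ≥ 0`. For a convex
function `N`, such as the distance to `T*`, the upper right derivative of `N ∘ T_sh` is therefore at
most `k * (N T_p - N T_sh)`, which is nonpositive wherever `N T_sh` exceeds the bound `φ` satisfied
by `N T_p`. Since this inequality is not strict, `N ∘ T_sh` is compared with the barriers
`φ + r * (1 + t)`, which strictly increase, and then `r → 0`.
-/

open Set Filter Topology NNReal

theorem image_le_const_of_liminf_slope_right_le {u u' : ℝ → ℝ} {a b c : ℝ}
    (hu : ContinuousOn u (Icc a b))
    (hu' : ∀ x ∈ Ico a b, ∀ r, u' x < r → ∃ᶠ z in 𝓝[>] x, slope u x z < r)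
    (ha : u a ≤ c) (bound : ∀ x ∈ Ico a b, c < u x → u' x ≤ 0) :
    ∀ x ∈ Icc a b, u x ≤ c := by
  intro x hx
  have le_barrier : ∀ r > 0, u x ≤ c + r * (1 + (x - a)) := by
    intro r hr
    refine image_le_of_liminf_slope_right_lt_deriv_boundary (B := fun y ↦ c + r * (1 + (y - a)))
      (B' := fun _ ↦ r) hu hu' (by linarith) (fun y ↦ ?_) (fun y hy hcontact ↦ ?_) hx
    · simpa using ((((hasDerivAt_id y).sub_const a).const_add 1).const_mul r).const_add c
    · have hpos : 0 < r * (1 + (y - a)) := mul_pos hr (by linarith [hy.1])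
      exact (bound y hy (by linarith)).trans_lt hr
  have hlen : 0 < 1 + (x - a) := by linarith [hx.1]
  refine le_of_forall_pos_le_add fun ε hε ↦ ?_
  simpa only [div_mul_cancel₀ _ hlen.ne'] using le_barrier (ε / (1 + (x - a))) (div_pos hε hlen)

theorem convexOn_add_smul_sub_le {E : Type*} [AddCommGroup E] [Module ℝ E] {N : E → ℝ}
    (hN : ConvexOn ℝ univ N) (y p : E) {s : ℝ} (hs : s ∈ Icc (0 : ℝ) 1) :
    N (y + s • (p - y)) ≤ N y + s * (N p - N y) := by
  calc N (y + s • (p - y)) = N ((1 - s) • y + s • p) := by congr 1; module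
    _ ≤ (1 - s) • N y + s • N p :=
        hN.2 (mem_univ y) (mem_univ p) (sub_nonneg.2 hs.2) hs.1 (sub_add_cancel 1 s)
    _ = N y + s * (N p - N y) := by simp only [smul_eq_mul]; ring

section Relaxation

variable {E : Type*} [NormedAddCommGroup E] [NormedSpace ℝ E] {N : E → ℝ} {K : ℝ≥0}

theorem slope_convex_comp_le (hN : ConvexOn ℝ univ N) (hK : LipschitzWith K N) (f : ℝ → E) (p : E)
    {k x z : ℝ} (hk : 0 ≤ k) (hxz : x < z) (hstep : (z - x) * k ≤ 1) :
    slope (N ∘ f) x z ≤ k * (N p - N (f x)) + K * ‖slope f x z - k • (p - f x)‖ := by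
  have hpos : 0 < z - x := sub_pos.2 hxz
  set euler := f x + ((z - x) * k) • (p - f x) with heuler
  have herror : ‖f z - euler‖ = (z - x) * ‖slope f x z - k • (p - f x)‖ := by
    rw [← norm_smul_of_nonneg hpos.le, smul_sub, sub_smul_slope, vsub_eq_sub, heuler, mul_smul,
      sub_add_eq_sub_sub]
  have hconvex : N euler ≤ N (f x) + (z - x) * k * (N p - N (f x)) :=
    convexOn_add_smul_sub_le hN (f x) p ⟨mul_nonneg hpos.le hk, hstep⟩
  have hlipschitz : N (f z) - N euler ≤ K * ‖f z - euler‖ := by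
    simpa only [dist_eq_norm] using (le_abs_self _).trans (hK.dist_le_mul (f z) euler)
  rw [slope_def_field, div_le_iff₀ hpos, Function.comp_apply, Function.comp_apply]
  rw [herror] at hlipschitz
  linarith

theorem eventually_slope_convex_comp_lt (hN : ConvexOn ℝ univ N) (hK : LipschitzWith K N)
    {f : ℝ → E} {p : E} {k x r : ℝ} (hk : 0 ≤ k)
    (hf : HasDerivWithinAt f (k • (p - f x)) (Ici x) x) (hr : k * (N p - N (f x)) < r) :
    ∀ᶠ z in 𝓝[>] x, slope (N ∘ f) x z < r := by
  have hslope : Tendsto (slope f x) (𝓝[>] x) (𝓝 (k • (p - f x))) :=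
    (hasDerivWithinAt_iff_tendsto_slope' self_notMem_Ioi).1 hf.Ioi_of_Ici
  have hbound : Tendsto (fun z ↦ k * (N p - N (f x)) + K * ‖slope f x z - k • (p - f x)‖)
      (𝓝[>] x) (𝓝 (k * (N p - N (f x)))) := by
    simpa using ((hslope.sub_const (k • (p - f x))).norm.const_mul (K : ℝ)).const_add
      (k * (N p - N (f x)))
  have hstep : Tendsto (fun z ↦ (z - x) * k) (𝓝[>] x) (𝓝 0) :=
    Continuous.tendsto' (by fun_prop) x 0 (by simp) |>.mono_left nhdsWithin_le_nhds
  filter_upwards [self_mem_nhdsWithin, hstep.eventually_le_const one_pos,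
    hbound.eventually_lt_const hr] with z hxz hz_step hz_bound
  exact (slope_convex_comp_le hN hK f p hk hxz hz_step).trans_lt hz_bound

theorem convex_comp_le_of_relaxation (hN : ConvexOn ℝ univ N) (hK : LipschitzWith K N)
    {f p : ℝ → E} {k : ℝ → ℝ} {a b c : ℝ} (hf : ContinuousOn f (Icc a b))
    (hf' : ∀ x ∈ Ico a b, HasDerivWithinAt f (k x • (p x - f x)) (Ici x) x)
    (hk : ∀ x ∈ Ico a b, 0 ≤ k x) (hp : ∀ x ∈ Ico a b, N (p x) ≤ c) (ha : N (f a) ≤ c) :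
    ∀ x ∈ Icc a b, N (f x) ≤ c :=
  image_le_const_of_liminf_slope_right_le (u := N ∘ f) (u' := fun x ↦ k x * (N (p x) - N (f x)))
    (hK.continuous.comp_continuousOn hf)
    (fun x hx _ hr ↦ (eventually_slope_convex_comp_lt hN hK (hk x hx) (hf' x hx) hr).frequently)
    ha
    (fun x hx hlt ↦ mul_nonpos_of_nonneg_of_nonpos (hk x hx)
      (sub_nonpos.2 ((hp x hx).trans hlt.le)))

theorem hot_storage_temperature_invariance_general {Tstar : E} {φ : ℝ} {Tp Tsh Tsh' : ℝ → E}
    {q V : ℝ → ℝ} (hTp : ∀ t ≥ 0, ‖Tp t - Tstar‖ ≤ φ) (hq : ∀ t ≥ 0, 0 ≤ q t)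
    (hV : ∀ t ≥ 0, 0 < V t) (hcont : ContinuousOn Tsh (Ici 0))
    (hderiv : ∀ t ≥ 0, HasDerivWithinAt Tsh (Tsh' t) (Ici t) t)
    (hode : ∀ t ≥ 0, V t • Tsh' t = q t • (Tp t - Tsh t)) (h0 : ‖Tsh 0 - Tstar‖ ≤ φ) :
    ∀ t ≥ 0, ‖Tsh t - Tstar‖ ≤ φ := by
  intro t ht
  have hrate : ∀ s ≥ 0, Tsh' s = (q s / V s) • (Tp s - Tsh s) := fun s hs ↦ by
    rw [div_eq_inv_mul, mul_smul, ← hode s hs, inv_smul_smul₀ (hV s hs).ne']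
  simp only [← dist_eq_norm] at hTp h0 ⊢
  exact convex_comp_le_of_relaxation (convexOn_univ_dist Tstar) (LipschitzWith.dist_left Tstar)
    (hcont.mono Icc_subset_Ici_self) (fun s hs ↦ hrate s hs.1 ▸ hderiv s hs.1)
    (fun s hs ↦ div_nonneg (hq s hs.1) (hV s hs.1).le) (fun s hs ↦ hTp s hs.1) h0 t ⟨ht, le_rfl⟩

end Relaxation

/-- Proposition 3, claim (I): invariance of the boundary layer
`|T_sh − T*| ≤ φ` for the storage-tank hot-layer temperature. -/
theorem hot_storage_temperature_invariance
    (Tstar φ : ℝ) (hφ : 0 < φ)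
    (Tp : ℝ → ℝ) (hTp : ∀ t ≥ (0:ℝ), |Tp t - Tstar| ≤ φ)
    (q : ℝ → ℝ) (hq : ∀ t ≥ (0:ℝ), 0 ≤ q t)
    (V : ℝ → ℝ) (hV : ∀ t ≥ (0:ℝ), 0 < V t)
    (Tsh : ℝ → ℝ)
    (hdiff : ∀ t ≥ (0:ℝ), DifferentiableAt ℝ Tsh t)
    (hode : ∀ t ≥ (0:ℝ), V t * deriv Tsh t = q t * (Tp t - Tsh t))
    (h0 : |Tsh 0 - Tstar| ≤ φ) :
    ∀ t ≥ (0:ℝ), |Tsh t - Tstar| ≤ φ :=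
  hot_storage_temperature_invariance_general hTp hq hV
    (fun t ht ↦ (hdiff t ht).continuousAt.continuousWithinAt)
    (fun t ht ↦ (hdiff t ht).hasDerivAt.hasDerivWithinAt) hode h0
end

section
/- Let T* be a real constant and c > 0, V_max > 0 constants. Let q : [0,∞) → ℝ be continuous with q(t) ≥ c for all t ≥ 0, let V : [0,∞) → ℝ be continuous with 0 < V(t) ≤ V_max for all t ≥ 0, and let T_p : [0,∞) → ℝ be continuous with T_p(t) → T* as t → ∞. If T_sh : [0,∞) → ℝ is differentiable and satisfies V(t) · T_sh'(t) = q(t) · (T_p(t) − T_sh(t)) for all t ≥ 0, then T_sh(t) → T* as t → ∞. -/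
open Filter

/-!
Divided by `V` and recentred at `Tstar`, the equation is a relaxation `x' = k (y - x)` with `y → 0`
and rate `k = q / V ≥ c / Vmax`. For small `h > 0`, `x (t + h)` is up to `o(h)` the convex
combination `(1 - h k) x t + h k y t`, so the upper right derivative of `‖x‖` is at most
`k (‖y‖ - ‖x‖)`. While `‖y‖ < ε`, the function `‖x‖` therefore cannot cross the barrier
`ε + ‖x s‖ exp (K s - K t)`, for any `K` with `K' ≤ k`. If `K → ∞`, as for `K t = (c / Vmax) t`,
the barrier tends to `ε`.
-/

section Relaxation

open Set Topology

variable {E : Type*} [NormedAddCommGroup E] [NormedSpace ℝ E]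

lemma slope_norm_le_norm_slope_add_smul {f : ℝ → E} {t z a : ℝ} (htz : t < z)
    (ha : (z - t) * a ≤ 1) :
    slope (fun τ => ‖f τ‖) t z ≤ ‖slope f t z + a • f t‖ - a * ‖f t‖ := by
  have hpos : 0 < z - t := sub_pos.2 htz
  have hdecomp : f z = (z - t) • (slope f t z + a • f t) + (1 - (z - t) * a) • f t := by
    rw [smul_add, sub_smul_slope, vsub_eq_sub]
    module
  have hnorm : ‖f z‖ ≤ (z - t) * ‖slope f t z + a • f t‖ + (1 - (z - t) * a) * ‖f t‖ := by
    calc ‖f z‖ ≤ ‖(z - t) • (slope f t z + a • f t)‖ + ‖(1 - (z - t) * a) • f t‖ := by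
          conv_lhs => rw [hdecomp]
          exact norm_add_le _ _
      _ = _ := by
          rw [norm_smul_of_nonneg hpos.le, norm_smul_of_nonneg (sub_nonneg.2 ha)]
  rw [slope_def_field, div_le_iff₀ hpos]
  linarith

lemma eventually_slope_norm_lt_of_hasDerivWithinAt {f : ℝ → E} {f' : E} {t a r : ℝ}
    (hf : HasDerivWithinAt f f' (Ioi t) t) (hr : ‖f' + a • f t‖ - a * ‖f t‖ < r) :
    ∀ᶠ z in 𝓝[>] t, slope (fun τ => ‖f τ‖) t z < r := by
  have hslope : Tendsto (fun z => ‖slope f t z + a • f t‖ - a * ‖f t‖) (𝓝[>] t)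
      (𝓝 (‖f' + a • f t‖ - a * ‖f t‖)) :=
    (((hasDerivWithinAt_iff_tendsto_slope' self_notMem_Ioi).1 hf).add_const _).norm.sub_const _
  have hsmall : ∀ᶠ z in 𝓝[>] t, (z - t) * a < 1 := by
    have hcont : ContinuousAt (fun z => (z - t) * a) t := by fun_prop
    exact (hcont.eventually_lt_const (by simp)).filter_mono nhdsWithin_le_nhds
  filter_upwards [hslope.eventually_lt_const hr, hsmall, self_mem_nhdsWithin] with z hz hza htz
  exact (slope_norm_le_norm_slope_add_smul htz hza.le).trans_lt hz

variable {x y : ℝ → E} {k K K' : ℝ → ℝ}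

lemma norm_le_add_mul_exp_of_hasDerivAt_smul_sub {s b ε : ℝ} (hsb : s ≤ b)
    (hK : ∀ t ∈ Icc s b, HasDerivAt K (K' t) t) (hk : ∀ t ∈ Icc s b, 0 < k t)
    (hKk : ∀ t ∈ Icc s b, K' t ≤ k t) (hy : ∀ t ∈ Icc s b, ‖y t‖ < ε)
    (hx : ∀ t ∈ Icc s b, HasDerivAt x (k t • (y t - x t)) t) :
    ‖x b‖ ≤ ε + ‖x s‖ * Real.exp (K s - K b) := by
  have hε : 0 < ε := (norm_nonneg _).trans_lt (hy s (left_mem_Icc.2 hsb))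
  have hbarrier : ∀ t ∈ Icc s b, HasDerivAt (fun τ => ε + ‖x s‖ * Real.exp (K s - K τ))
      (‖x s‖ * (Real.exp (K s - K t) * -K' t)) t := fun t ht =>
    (((hK t ht).const_sub (K s)).exp.const_mul ‖x s‖).const_add ε
  have hslope : ∀ t ∈ Ico s b, ∀ r, k t * (‖y t‖ - ‖x t‖) < r →
      ∃ᶠ z in 𝓝[>] t, slope (fun τ => ‖x τ‖) t z < r := by
    intro t ht r hr
    have htb := Ico_subset_Icc_self ht
    refine (eventually_slope_norm_lt_of_hasDerivWithinAt (a := k t)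
      (hx t htb).hasDerivWithinAt ?_).frequently
    rwa [← smul_add, sub_add_cancel, norm_smul_of_nonneg (hk t htb).le, ← mul_sub]
  refine image_le_of_liminf_slope_right_lt_deriv_boundary'
    (fun t ht => (hx t ht).continuousAt.norm.continuousWithinAt) hslope (by simpa using hε.le)
    (fun t ht => (hbarrier t ht).continuousAt.continuousWithinAt)
    (fun t ht => (hbarrier t (Ico_subset_Icc_self ht)).hasDerivWithinAt) ?_ (right_mem_Icc.2 hsb)
  intro t ht hxt
  have htb := Ico_subset_Icc_self ht
  calc k t * (‖y t‖ - ‖x t‖) < k t * -(‖x s‖ * Real.exp (K s - K t)) :=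
        mul_lt_mul_of_pos_left (by linarith [hy t htb]) (hk t htb)
    _ = -(k t * (‖x s‖ * Real.exp (K s - K t))) := mul_neg _ _
    _ ≤ -(K' t * (‖x s‖ * Real.exp (K s - K t))) := by
        gcongr
        exact hKk t htb
    _ = ‖x s‖ * (Real.exp (K s - K t) * -K' t) := by ring

lemma tendsto_zero_of_hasDerivAt_smul_sub (hKtop : Tendsto K atTop atTop)
    (hK : ∀ᶠ t in atTop, HasDerivAt K (K' t) t) (hk : ∀ᶠ t in atTop, 0 < k t)
    (hKk : ∀ᶠ t in atTop, K' t ≤ k t) (hy : Tendsto y atTop (𝓝 0))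
    (hx : ∀ᶠ t in atTop, HasDerivAt x (k t • (y t - x t)) t) :
    Tendsto x atTop (𝓝 0) := by
  rw [NormedAddGroup.tendsto_nhds_zero] at hy ⊢
  intro ε hε
  obtain ⟨s, hs⟩ := eventually_atTop.1
    (hK.and (hk.and (hKk.and ((hy (ε / 2) (half_pos hε)).and hx))))
  have hbound : ∀ t ≥ s, ‖x t‖ ≤ ε / 2 + ‖x s‖ * Real.exp (K s - K t) := fun t hst =>
    norm_le_add_mul_exp_of_hasDerivAt_smul_sub hst (fun τ hτ => (hs τ hτ.1).1)
      (fun τ hτ => (hs τ hτ.1).2.1) (fun τ hτ => (hs τ hτ.1).2.2.1)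
      (fun τ hτ => (hs τ hτ.1).2.2.2.1) (fun τ hτ => (hs τ hτ.1).2.2.2.2)
  have hbarrier : Tendsto (fun t => ε / 2 + ‖x s‖ * Real.exp (K s - K t)) atTop
      (𝓝 (ε / 2 + ‖x s‖ * 0)) :=
    ((Real.tendsto_exp_atBot.comp
      (tendsto_atBot_add_const_left _ _ (tendsto_neg_atTop_atBot.comp hKtop))).const_mul
        _).const_add _
  filter_upwards [hbarrier.eventually_lt_const (by linarith : ε / 2 + ‖x s‖ * 0 < ε),
    eventually_ge_atTop s] with t htε hst
  exact (hbound t hst).trans_lt htε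

lemma tendsto_of_hasDerivAt_smul_sub {L : E} (hKtop : Tendsto K atTop atTop)
    (hK : ∀ᶠ t in atTop, HasDerivAt K (K' t) t) (hk : ∀ᶠ t in atTop, 0 < k t)
    (hKk : ∀ᶠ t in atTop, K' t ≤ k t) (hy : Tendsto y atTop (𝓝 L))
    (hx : ∀ᶠ t in atTop, HasDerivAt x (k t • (y t - x t)) t) :
    Tendsto x atTop (𝓝 L) := by
  rw [← tendsto_sub_nhds_zero_iff] at hy ⊢
  refine tendsto_zero_of_hasDerivAt_smul_sub hKtop hK hk hKk hy (hx.mono fun t ht => ?_)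
  simpa only [sub_sub_sub_cancel_right] using ht.sub_const L

theorem hot_storage_temperature_convergence_general {Tstar : E} {c Vmax : ℝ} {q V : ℝ → ℝ}
    {Tp Tsh : ℝ → E} (hc : 0 < c) (hq : ∀ᶠ t in atTop, c ≤ q t)
    (hV : ∀ᶠ t in atTop, 0 < V t ∧ V t ≤ Vmax) (hTp : Tendsto Tp atTop (𝓝 Tstar))
    (hdiff : ∀ᶠ t in atTop, DifferentiableAt ℝ Tsh t)
    (hode : ∀ᶠ t in atTop, V t • deriv Tsh t = q t • (Tp t - Tsh t)) :
    Tendsto Tsh atTop (𝓝 Tstar) := by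
  have hVmax : 0 < Vmax := hV.exists.elim fun _ h => h.1.trans_le h.2
  refine tendsto_of_hasDerivAt_smul_sub (k := fun t => q t / V t)
    (tendsto_id.const_mul_atTop (div_pos hc hVmax))
    (.of_forall fun t => (hasDerivAt_id t).const_mul (c / Vmax)) ?_ ?_ hTp ?_
  · filter_upwards [hq, hV] with t hqt hVt using div_pos (hc.trans_le hqt) hVt.1
  · filter_upwards [hq, hV] with t hqt ⟨hVpos, hVle⟩
    rw [mul_one]
    exact div_le_div₀ (hc.le.trans hqt) hqt hVpos hVle
  · filter_upwards [hV, hdiff, hode] with t hVt hdifft hodet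
    have hderiv : deriv Tsh t = (q t / V t) • (Tp t - Tsh t) := by
      rw [div_eq_inv_mul, mul_smul, ← hodet, inv_smul_smul₀ hVt.1.ne']
    exact hderiv ▸ hdifft.hasDerivAt

end Relaxation

/-- Proposition 3, claim (II): if the producer flow is bounded below by `c > 0`,
the hot-layer volume is positive and bounded, and the producer temperature
converges to `T*`, then the storage-tank hot-layer temperature converges to `T*`. -/
theorem hot_storage_temperature_convergence
    (Tstar c Vmax : ℝ) (hc : 0 < c) (hVmax : 0 < Vmax)
    (q : ℝ → ℝ) (hqcont : ContinuousOn q (Set.Ici (0:ℝ)))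
    (hq : ∀ t ≥ (0:ℝ), c ≤ q t)
    (V : ℝ → ℝ) (hVcont : ContinuousOn V (Set.Ici (0:ℝ)))
    (hV : ∀ t ≥ (0:ℝ), 0 < V t ∧ V t ≤ Vmax)
    (Tp : ℝ → ℝ) (hTpcont : ContinuousOn Tp (Set.Ici (0:ℝ)))
    (hTp : Tendsto Tp atTop (nhds Tstar))
    (Tsh : ℝ → ℝ)
    (hdiff : ∀ t ≥ (0:ℝ), DifferentiableAt ℝ Tsh t)
    (hode : ∀ t ≥ (0:ℝ), V t * deriv Tsh t = q t * (Tp t - Tsh t)) :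
    Tendsto Tsh atTop (nhds Tstar) :=
  have hnonneg := eventually_ge_atTop (0 : ℝ)
  hot_storage_temperature_convergence_general hc (hnonneg.mono hq) (hnonneg.mono hV) hTp
    (hnonneg.mono hdiff) (hnonneg.mono hode)
end

section
/- Let E, N and K be finite sets, σ : E → N (source node of each edge), τ : E → N (target node of each edge) and ν : K → N (injection node of each tank) be maps, and let V_e > 0 (e ∈ E) and V_n > 0 (n ∈ N) be constants. Let q_e : [0,∞) → ℝ (e ∈ E) and r_k : [0,∞) → ℝ (k ∈ K) satisfy q_e(t) ≥ 0 and r_k(t) ≥ 0 for all t ≥ 0, and let S_k : [0,∞) → ℝ (k ∈ K) satisfy S_k(t) ≥ θ for all t ≥ 0, where θ is a real constant. Suppose T_e : [0,∞) → ℝ (e ∈ E) and T_n : [0,∞) → ℝ (n ∈ N) are differentiable and satisfy, for all t ≥ 0: V_e · T_e'(t) = q_e(t) · (T_{σ(e)}(t) − T_e(t)) for every e ∈ E, and V_n · T_n'(t) = Σ_{e ∈ E, τ(e) = n} q_e(t) · (T_e(t) − T_n(t)) + Σ_{k ∈ K, ν(k) = n} r_k(t) · (S_k(t) − T_n(t))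 for every n ∈ N. If T_e(0) ≥ θ for all e ∈ E and T_n(0) ≥ θ for all n ∈ N, then T_e(t) ≥ θ and T_n(t) ≥ θ for all t ≥ 0. -/
/-!
Below `θ`, a coldest pipe or junction can only warm up: every temperature that flows into it is at
least its own. This gives a minimum principle. If a temperature fell below `θ`, then for small
`ε > 0` the minimum of `T i t + ε * t` over all components `i` and a compact time interval would be
below `θ`, hence attained at a positive time, where the left derivative of `T i` would be at most
`-ε`.
-/

open Set Filter Topology Function

theorem leftDeriv_nonpos_of_isLocalMinOn_Iic {f : ℝ → ℝ} {f' t : ℝ}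
    (hmin : IsLocalMinOn f (Iic t) t) (hf : HasDerivWithinAt f f' (Iic t) t) : f' ≤ 0 := by
  have left_mem : t - 1 - t ∈ posTangentConeAt (Iic t) t :=
    sub_mem_posTangentConeAt_of_segment_subset <|
      (convex_Iic t).segment_subset self_mem_Iic (sub_le_self t zero_le_one)
  simpa using hmin.hasFDerivWithinAt_nonneg hf.hasFDerivWithinAt left_mem

section MinimumPrinciple

variable {ι : Type*} {f f' : ι → ℝ → ℝ} {a b c : ℝ}

theorem le_of_leftDeriv_pos_of_isMin [TopologicalSpace ι] [CompactSpace ι]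
    (hf : ContinuousOn (uncurry f) (univ ×ˢ Icc a b))
    (hf' : ∀ i, ∀ t ∈ Ioc a b, HasDerivWithinAt (f i) (f' i t) (Iic t) t)
    (ha : ∀ i, c ≤ f i a)
    (hpos : ∀ i, ∀ t ∈ Ioc a b, (∀ j, f i t ≤ f j t) → f i t < c → 0 < f' i t) :
    ∀ i, ∀ t ∈ Icc a b, c ≤ f i t := by
  by_contra! ⟨i₀, t₀, ht₀, hlt₀⟩
  obtain ⟨⟨i, t⟩, ⟨-, ht⟩, hmin⟩ :=
    (isCompact_univ.prod isCompact_Icc).exists_isMinOn ⟨(i₀, t₀), mem_univ i₀, ht₀⟩ hf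
  have f_min : ∀ j, ∀ s ∈ Icc a b, f i t ≤ f j s := fun j s hs =>
    hmin (mk_mem_prod (mem_univ j) hs)
  have f_lt : f i t < c := (f_min i₀ t₀ ht₀).trans_lt hlt₀
  have ht_Ioc : t ∈ Ioc a b :=
    ⟨ht.1.lt_of_ne fun hat => (hat ▸ ha i).not_gt f_lt, ht.2⟩
  have localMin : IsLocalMinOn (f i) (Iic t) t :=
    mem_of_superset (Icc_mem_nhdsLE ht_Ioc.1) fun s hs => f_min i s ⟨hs.1, hs.2.trans ht.2⟩
  exact (leftDeriv_nonpos_of_isLocalMinOn_Iic localMin (hf' i t ht_Ioc)).not_gt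
    (hpos i t ht_Ioc (fun j => f_min j t ht) f_lt)

theorem le_of_leftDeriv_nonneg_of_isMin [TopologicalSpace ι] [CompactSpace ι]
    (hf : ContinuousOn (uncurry f) (univ ×ˢ Icc a b))
    (hf' : ∀ i, ∀ t ∈ Ioc a b, HasDerivWithinAt (f i) (f' i t) (Iic t) t)
    (ha : ∀ i, c ≤ f i a)
    (hnonneg : ∀ i, ∀ t ∈ Ioc a b, (∀ j, f i t ≤ f j t) → f i t < c → 0 ≤ f' i t) :
    ∀ i, ∀ t ∈ Icc a b, c ≤ f i t := by
  have perturbed (ε : ℝ) (hε : 0 < ε) : ∀ i, ∀ t ∈ Icc a b, c ≤ f i t + ε * (t - a) := by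
    refine le_of_leftDeriv_pos_of_isMin (f' := fun i t => f' i t + ε) ?_ (fun i t ht => ?_)
      (fun i => by simpa using ha i) (fun i t ht hmin hlt => ?_)
    · exact hf.add (by fun_prop : Continuous fun p : ι × ℝ => ε * (p.2 - a)).continuousOn
    · simpa using (hf' i t ht).fun_add (((hasDerivWithinAt_id t _).sub_const a).const_mul ε)
    · have drift_nonneg : 0 ≤ ε * (t - a) := mul_nonneg hε.le (sub_nonneg.2 ht.1.le)
      have f'_nonneg : 0 ≤ f' i t :=
        hnonneg i t ht (fun j => le_of_add_le_add_right (hmin j)) (by linarith)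
      exact add_pos_of_nonneg_of_pos f'_nonneg hε
  intro i t ht
  have tendsto_f : Tendsto (fun ε => f i t + ε * (t - a)) (𝓝[>] 0) (𝓝 (f i t)) :=
    tendsto_nhdsWithin_of_tendsto_nhds <|
      (by fun_prop : Continuous fun ε => f i t + ε * (t - a)).tendsto' 0 _ (by simp)
  exact ge_of_tendsto tendsto_f <|
    eventually_mem_nhdsWithin.mono fun ε hε => perturbed ε hε i t ht

theorem le_of_leftDeriv_nonneg_of_isMin_of_finite [Finite ι]
    (hf : ∀ i, ContinuousOn (f i) (Icc a b))
    (hf' : ∀ i, ∀ t ∈ Ioc a b, HasDerivWithinAt (f i) (f' i t) (Iic t) t)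
    (ha : ∀ i, c ≤ f i a)
    (hnonneg : ∀ i, ∀ t ∈ Ioc a b, (∀ j, f i t ≤ f j t) → f i t < c → 0 ≤ f' i t) :
    ∀ i, ∀ t ∈ Icc a b, c ≤ f i t := by
  let _ : TopologicalSpace ι := ⊥
  have : DiscreteTopology ι := ⟨rfl⟩
  refine le_of_leftDeriv_nonneg_of_isMin ?_ hf' ha hnonneg
  exact continuousOn_prod_of_discrete_left.2 fun i => (hf i).mono fun s hs => hs.2

end MinimumPrinciple

theorem sum_mul_sub_nonneg {ι R : Type*} [Ring R] [PartialOrder R] [IsOrderedRing R]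
    {s : Finset ι} {w x : ι → R} {y : R} (hw : ∀ i ∈ s, 0 ≤ w i) (hx : ∀ i ∈ s, y ≤ x i) :
    0 ≤ ∑ i ∈ s, w i * (x i - y) :=
  Finset.sum_nonneg fun i hi => mul_nonneg (hw i hi) (sub_nonneg.2 (hx i hi))

/-- Proposition 4: lower-bound invariance of the supply-layer temperatures of the
distribution network, modeled as a finite directed graph with edge (pipe)
dynamics `V_e T_e' = q_e (T_{σ(e)} − T_e)` and node (junction) dynamics driven
by incoming edges and tank injections with temperatures `S_k ≥ θ`. -/
theorem supply_layer_lower_bound_invariance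
    {E N K : Type*} [Fintype E] [Fintype K] [DecidableEq N]
    (σ τ : E → N) (ν : K → N)
    (Ve : E → ℝ) (hVe : ∀ e, 0 < Ve e)
    (Vn : N → ℝ) (hVn : ∀ n, 0 < Vn n)
    (q : E → ℝ → ℝ) (hq : ∀ e, ∀ t ≥ (0:ℝ), 0 ≤ q e t)
    (r : K → ℝ → ℝ) (hr : ∀ k, ∀ t ≥ (0:ℝ), 0 ≤ r k t)
    (θ : ℝ) (S : K → ℝ → ℝ) (hS : ∀ k, ∀ t ≥ (0:ℝ), θ ≤ S k t)
    (Te : E → ℝ → ℝ) (Tn : N → ℝ → ℝ)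
    (hTeDiff : ∀ e, ∀ t ≥ (0:ℝ), DifferentiableAt ℝ (Te e) t)
    (hTnDiff : ∀ n, ∀ t ≥ (0:ℝ), DifferentiableAt ℝ (Tn n) t)
    (hodeE : ∀ e, ∀ t ≥ (0:ℝ),
      Ve e * deriv (Te e) t = q e t * (Tn (σ e) t - Te e t))
    (hodeN : ∀ n, ∀ t ≥ (0:ℝ),
      Vn n * deriv (Tn n) t
        = (∑ e ∈ Finset.univ.filter (fun e => τ e = n), q e t * (Te e t - Tn n t))
          + (∑ k ∈ Finset.univ.filter (fun k => ν k = n), r k t * (S k t - Tn n t)))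
    (h0E : ∀ e, θ ≤ Te e 0) (h0N : ∀ n, θ ≤ Tn n 0) :
    ∀ t ≥ (0:ℝ), (∀ e, θ ≤ Te e t) ∧ (∀ n, θ ≤ Tn n t) := by
  have edge_deriv_nonneg (e s) (hs : 0 ≤ s) (hle : Te e s ≤ Tn (σ e) s) : 0 ≤ deriv (Te e) s := by
    refine nonneg_of_mul_nonneg_right ?_ (hVe e)
    exact hodeE e s hs ▸ mul_nonneg (hq e s hs) (sub_nonneg.2 hle)
  have node_deriv_nonneg (n s) (hs : 0 ≤ s) (hle : ∀ e, Tn n s ≤ Te e s) (hlt : Tn n s < θ) :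
      0 ≤ deriv (Tn n) s := by
    refine nonneg_of_mul_nonneg_right ?_ (hVn n)
    exact hodeN n s hs ▸ add_nonneg (sum_mul_sub_nonneg (fun e _ => hq e s hs) fun e _ => hle e)
      (sum_mul_sub_nonneg (fun k _ => hr k s hs) fun k _ => hlt.le.trans (hS k s hs))
  intro t ht
  suffices bound : ∀ n, (∀ e, θ ≤ Te e t) ∧ θ ≤ Tn n t from
    ⟨fun e => (bound (σ e)).1 e, fun n => (bound n).2⟩
  intro n
  -- `N` may be infinite, but `n` and the source nodes form, with all edges, a closed subsystem.
  let T : E ⊕ ↥(insert n (range σ)) → ℝ → ℝ := Sum.elim Te fun m => Tn m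
  have : Finite ↥(insert n (range σ)) := (finite_range σ).insert n
  have diff : ∀ i, ∀ s ≥ (0 : ℝ), DifferentiableAt ℝ (T i) s := Sum.rec hTeDiff fun m => hTnDiff m
  have T_ge : ∀ i, θ ≤ T i t := by
    refine fun i => le_of_leftDeriv_nonneg_of_isMin_of_finite (f' := fun i => deriv (T i))
      (fun i s hs => (diff i s hs.1).continuousAt.continuousWithinAt)
      (fun i s hs => (diff i s hs.1.le).hasDerivAt.hasDerivWithinAt)
      (Sum.rec h0E fun m => h0N m) ?_ i t (right_mem_Icc.2 ht)
    rintro (e | m) s hs hmin hlt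
    · exact edge_deriv_nonneg e s hs.1.le (hmin (.inr ⟨σ e, .inr ⟨e, rfl⟩⟩))
    · exact node_deriv_nonneg m s hs.1.le (fun e => hmin (.inl e)) hlt
  exact ⟨fun e => T_ge (.inl e), T_ge (.inr ⟨n, mem_insert n _⟩)⟩
end

section
/- Let E, N and K be finite sets, σ : E → N, τ : E → N and ν : K → N be maps, and let V_e > 0 (e ∈ E) and V_n > 0 (n ∈ N) be constants. Let q_e : [0,∞) → ℝ (e ∈ E) and r_k : [0,∞) → ℝ (k ∈ K) satisfy q_e(t) ≥ 0 and r_k(t) ≥ 0 for all t ≥ 0, and let S_k : [0,∞) → ℝ (k ∈ K) satisfy θ₁ ≤ S_k(t) ≤ θ₂ for all t ≥ 0, where θ₁ ≤ θ₂ are real constants. Suppose T_e : [0,∞) → ℝ (e ∈ E) and T_n : [0,∞) → ℝ (n ∈ N) are differentiable and satisfy, for all t ≥ 0: V_e · T_e'(t) = q_e(t) · (T_{σ(e)}(t) − T_e(t)) for every e ∈ E, and V_n · T_n'(t) = Σ_{e ∈ E, τ(e) = n} q_e(t) · (T_e(t) − T_n(t)) + Σ_{k ∈ K, ν(k) = n}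 r_k(t) · (S_k(t) − T_n(t)) for every n ∈ N. If θ₁ ≤ T_e(0) ≤ θ₂ for all e ∈ E and θ₁ ≤ T_n(0) ≤ θ₂ for all n ∈ N, then θ₁ ≤ T_e(t) ≤ θ₂ and θ₁ ≤ T_n(t) ≤ θ₂ for all t ≥ 0; in particular all network temperatures remain bounded. -/
/-!
A finite family of functions that starts below `θ` stays below `θ` as soon as, whenever one member
exceeds `θ` and dominates all the others, its derivative is nonpositive: subtracting `ε (t - a)`
makes the derivative negative, and then the joint maximum over the family and the time interval,
if above `θ`, could be attained at no time `t > a`.  In a thermal network every temperature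
relaxes towards other temperatures of the network and towards the injections, so the hottest
component cannot heat up once it exceeds all injections.  The lower bound is the upper bound for the
negated temperatures.

There may be infinitely many nodes, but a pipe sees no node other than its source, so the argument
applies to any finite set of nodes containing all sources.
-/

open Set

section MaximumPrinciple

theorem exists_forall_le_of_isCompact {ι X α : Type*} [Finite ι] [Nonempty ι] [TopologicalSpace X]
    [LinearOrder α] [TopologicalSpace α] [ClosedIciTopology α] {s : Set X} (hs : IsCompact s)
    (hne : s.Nonempty) {f : ι → X → α} (hf : ∀ i, ContinuousOn (f i) s) :
    ∃ i, ∃ x ∈ s, ∀ j, ∀ y ∈ s, f j y ≤ f i x := by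
  choose x hxs hx using fun i ↦ hs.exists_isMaxOn hne (hf i)
  obtain ⟨i, hi⟩ := Finite.exists_max fun i ↦ f i (x i)
  exact ⟨i, x i, hxs i, fun j y hy ↦ (hx j hy).trans (hi j)⟩

theorem deriv_nonneg_of_isMaxOn_Icc_right {g : ℝ → ℝ} {g' a b : ℝ} (hab : a < b)
    (hg : HasDerivWithinAt g g' (Icc a b) b) (hmax : IsMaxOn g (Icc a b) b) : 0 ≤ g' := by
  have hcone : a - b ∈ posTangentConeAt (Icc a b) b :=
    sub_mem_posTangentConeAt_of_segment_subset <| by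
      rw [segment_symm, segment_eq_Icc hab.le]
  have hslope : (a - b) * g' ≤ 0 := by
    simpa using hmax.localize.hasFDerivWithinAt_nonpos hg.hasFDerivWithinAt hcone
  exact nonneg_of_mul_nonpos_right hslope (sub_neg.2 hab)

variable {ι : Type*} [Finite ι] {f f' : ι → ℝ → ℝ} {a b θ : ℝ}

theorem le_of_deriv_neg_of_forall_le (hf : ∀ i, ContinuousOn (f i) (Icc a b))
    (hf' : ∀ i, ∀ t ∈ Ioc a b, HasDerivWithinAt (f i) (f' i t) (Iic t) t)
    (ha : ∀ i, f i a ≤ θ)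
    (hneg : ∀ i, ∀ t ∈ Ioc a b, (∀ j, f j t ≤ f i t) → θ < f i t → f' i t < 0)
    (i : ι) {t : ℝ} (ht : t ∈ Icc a b) : f i t ≤ θ := by
  have : Nonempty ι := ⟨i⟩
  obtain ⟨m, s, hs, hmax⟩ := exists_forall_le_of_isCompact isCompact_Icc ⟨t, ht⟩ hf
  suffices hms : f m s ≤ θ from (hmax i t ht).trans hms
  by_contra! hθ
  have has : a < s := hs.1.lt_of_ne fun h ↦ (h ▸ hθ).not_ge (ha m)
  have hderiv_nonneg : 0 ≤ f' m s :=
    deriv_nonneg_of_isMaxOn_Icc_right has ((hf' m s ⟨has, hs.2⟩).mono Icc_subset_Iic_self)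
      fun x hx ↦ hmax m x (Icc_subset_Icc_right hs.2 hx)
  exact (hneg m s ⟨has, hs.2⟩ (fun j ↦ hmax j s hs) hθ).not_ge hderiv_nonneg

theorem le_of_deriv_nonpos_of_forall_le (hf : ∀ i, ContinuousOn (f i) (Icc a b))
    (hf' : ∀ i, ∀ t ∈ Ioc a b, HasDerivWithinAt (f i) (f' i t) (Iic t) t)
    (ha : ∀ i, f i a ≤ θ)
    (hnonpos : ∀ i, ∀ t ∈ Ioc a b, (∀ j, f j t ≤ f i t) → θ < f i t → f' i t ≤ 0)
    (i : ι) {t : ℝ} (ht : t ∈ Icc a b) : f i t ≤ θ := by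
  have hperturbed : ∀ ε > 0, f i t - ε * (t - a) ≤ θ := fun ε hε ↦ by
    refine le_of_deriv_neg_of_forall_le (f := fun i t ↦ f i t - ε * (t - a))
      (f' := fun i t ↦ f' i t - ε) (fun j ↦ (hf j).sub (by fun_prop)) (fun j s hs ↦ ?_)
      (by simpa using ha) (fun j s hs hmax hθ ↦ ?_) i ht
    · simpa using (hf' j s hs).fun_sub
        (((hasDerivAt_id s).sub_const a).const_mul ε).hasDerivWithinAt
    · have hdrift : 0 ≤ ε * (s - a) := mul_nonneg hε.le (sub_nonneg.2 hs.1.le)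
      have hj : f' j s ≤ 0 := hnonpos j s hs (fun k ↦ by simpa using hmax k) (by linarith)
      linarith
  rcases ht.1.eq_or_lt with rfl | hat
  · exact ha i
  · refine le_of_forall_pos_le_add fun δ hδ ↦ ?_
    have hbound := hperturbed (δ / (t - a)) (div_pos hδ (sub_pos.2 hat))
    rw [div_mul_cancel₀ δ (sub_pos.2 hat).ne'] at hbound
    linarith

end MaximumPrinciple

/-- A distribution network with pipes `E`, junctions `N` and injection points `K`, with its volumes
and its flow rates as functions of time.  Only times `t ≥ 0` are constrained, and no conservation
of flow at the junctions is assumed. -/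
structure ThermalNetwork (E N K : Type*) where
  source : E → N
  target : E → N
  inlet : K → N
  pipeVolume : E → ℝ
  pipeVolume_pos : ∀ e, 0 < pipeVolume e
  nodeVolume : N → ℝ
  nodeVolume_pos : ∀ n, 0 < nodeVolume n
  flow : E → ℝ → ℝ
  flow_nonneg : ∀ e, ∀ t ≥ 0, 0 ≤ flow e t
  injection : K → ℝ → ℝ
  injection_nonneg : ∀ k, ∀ t ≥ 0, 0 ≤ injection k t

namespace ThermalNetwork

variable {E N K : Type*} [Fintype E] [Fintype K] [DecidableEq N]

/-- The pipe temperatures `Te` and junction temperatures `Tn` solve the energy balance of the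
network `G` for `t ≥ 0`, when fluid of temperature `S k` enters at the injection point `k`. -/
structure IsSolution (G : ThermalNetwork E N K) (S : K → ℝ → ℝ) (Te : E → ℝ → ℝ)
    (Tn : N → ℝ → ℝ) : Prop where
  differentiableAt_pipe : ∀ e, ∀ t ≥ 0, DifferentiableAt ℝ (Te e) t
  differentiableAt_node : ∀ n, ∀ t ≥ 0, DifferentiableAt ℝ (Tn n) t
  pipe_balance : ∀ e, ∀ t ≥ 0,
    G.pipeVolume e * deriv (Te e) t = G.flow e t * (Tn (G.source e) t - Te e t)
  node_balance : ∀ n, ∀ t ≥ 0,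
    G.nodeVolume n * deriv (Tn n) t =
      ∑ e with G.target e = n, G.flow e t * (Te e t - Tn n t) +
        ∑ k with G.inlet k = n, G.injection k t * (S k t - Tn n t)

namespace IsSolution

variable {G : ThermalNetwork E N K} {S : K → ℝ → ℝ} {Te : E → ℝ → ℝ} {Tn : N → ℝ → ℝ} {t θ : ℝ}

theorem neg (h : G.IsSolution S Te Tn) : G.IsSolution (-S) (-Te) (-Tn) where
  differentiableAt_pipe e t ht := (h.differentiableAt_pipe e t ht).neg
  differentiableAt_node n t ht := (h.differentiableAt_node n t ht).neg
  pipe_balance e t ht := by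
    simp only [Pi.neg_apply, deriv.neg]
    linear_combination -h.pipe_balance e t ht
  node_balance n t ht := by
    simp only [Pi.neg_apply, deriv.neg, neg_sub_neg]
    rw [mul_neg, h.node_balance n t ht, neg_add, ← Finset.sum_neg_distrib,
      ← Finset.sum_neg_distrib]
    simp only [← mul_neg, neg_sub]

theorem deriv_pipe_nonpos (h : G.IsSolution S Te Tn) (ht : 0 ≤ t) {e : E}
    (hsource : Tn (G.source e) t ≤ Te e t) : deriv (Te e) t ≤ 0 := by
  refine nonpos_of_mul_nonpos_right ?_ (G.pipeVolume_pos e)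
  rw [h.pipe_balance e t ht]
  exact mul_nonpos_of_nonneg_of_nonpos (G.flow_nonneg e t ht) (sub_nonpos.2 hsource)

theorem deriv_node_nonpos (h : G.IsSolution S Te Tn) (ht : 0 ≤ t) {n : N}
    (hpipe : ∀ e, G.target e = n → Te e t ≤ Tn n t)
    (hinlet : ∀ k, G.inlet k = n → S k t ≤ Tn n t) : deriv (Tn n) t ≤ 0 := by
  refine nonpos_of_mul_nonpos_right ?_ (G.nodeVolume_pos n)
  rw [h.node_balance n t ht]
  refine add_nonpos (Finset.sum_nonpos fun e he ↦ ?_) (Finset.sum_nonpos fun k hk ↦ ?_)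
  · exact mul_nonpos_of_nonneg_of_nonpos (G.flow_nonneg e t ht)
      (sub_nonpos.2 (hpipe e (Finset.mem_filter_univ e |>.1 he)))
  · exact mul_nonpos_of_nonneg_of_nonpos (G.injection_nonneg k t ht)
      (sub_nonpos.2 (hinlet k (Finset.mem_filter_univ k |>.1 hk)))

theorem le_of_range_source_subset (h : G.IsSolution S Te Tn) (hS : ∀ k, ∀ t ≥ 0, S k t ≤ θ)
    (hTe : ∀ e, Te e 0 ≤ θ) {M : Set N} (hTn : ∀ n ∈ M, Tn n 0 ≤ θ) (hM : M.Finite)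
    (hsource : range G.source ⊆ M) (ht : 0 ≤ t) :
    (∀ e, Te e t ≤ θ) ∧ ∀ n ∈ M, Tn n t ≤ θ := by
  have : Finite M := hM
  let T : E ⊕ M → ℝ → ℝ := Sum.elim Te fun n ↦ Tn n
  have hdiff : ∀ i, ∀ s ≥ 0, DifferentiableAt ℝ (T i) s := by
    rintro (e | n)
    exacts [h.differentiableAt_pipe e, h.differentiableAt_node n]
  have hinit : ∀ i, T i 0 ≤ θ := by
    rintro (e | n)
    exacts [hTe e, hTn n n.2]
  have hcool : ∀ i, ∀ s ∈ Ioc 0 t, (∀ j, T j s ≤ T i s) → θ < T i s → deriv (T i) s ≤ 0 := by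
    rintro (e | n) s hs hmax hθ
    · exact h.deriv_pipe_nonpos hs.1.le (hmax (.inr ⟨G.source e, hsource (mem_range_self e)⟩))
    · exact h.deriv_node_nonpos hs.1.le (fun e _ ↦ hmax (.inl e))
        fun k _ ↦ (hS k s hs.1.le).trans hθ.le
  have hT : ∀ i, T i t ≤ θ := fun i ↦
    le_of_deriv_nonpos_of_forall_le
      (fun j s hs ↦ (hdiff j s hs.1).continuousAt.continuousWithinAt)
      (fun j s hs ↦ (hdiff j s hs.1.le).hasDerivAt.hasDerivWithinAt) hinit hcool i
      (right_mem_Icc.2 ht)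
  exact ⟨fun e ↦ hT (.inl e), fun n hn ↦ hT (.inr ⟨n, hn⟩)⟩

theorem le_of_initial_le (h : G.IsSolution S Te Tn) (hS : ∀ k, ∀ t ≥ 0, S k t ≤ θ)
    (hTe : ∀ e, Te e 0 ≤ θ) (hTn : ∀ n, Tn n 0 ≤ θ) (ht : 0 ≤ t) :
    (∀ e, Te e t ≤ θ) ∧ ∀ n, Tn n t ≤ θ := by
  have hfin : (range G.source).Finite := finite_range G.source
  constructor
  · exact (h.le_of_range_source_subset hS hTe (fun n _ ↦ hTn n) hfin subset_rfl ht).1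
  · exact fun n ↦ (h.le_of_range_source_subset hS hTe (fun n _ ↦ hTn n) (hfin.insert n)
      (subset_insert n _) ht).2 n (mem_insert n _)

theorem ge_of_initial_ge (h : G.IsSolution S Te Tn) (hS : ∀ k, ∀ t ≥ 0, θ ≤ S k t)
    (hTe : ∀ e, θ ≤ Te e 0) (hTn : ∀ n, θ ≤ Tn n 0) (ht : 0 ≤ t) :
    (∀ e, θ ≤ Te e t) ∧ ∀ n, θ ≤ Tn n t := by
  have hneg := h.neg.le_of_initial_le (fun k s hs ↦ neg_le_neg (hS k s hs))
    (fun e ↦ neg_le_neg (hTe e)) (fun n ↦ neg_le_neg (hTn n)) ht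
  exact ⟨fun e ↦ neg_le_neg_iff.1 (hneg.1 e), fun n ↦ neg_le_neg_iff.1 (hneg.2 n)⟩

end IsSolution

end ThermalNetwork

/-- Two-sided invariance (boundedness) of the distribution-network layer
temperatures: if all injection temperatures `S_k` stay in `[θ₁, θ₂]` and all
initial temperatures lie in `[θ₁, θ₂]`, then all edge and node temperatures
remain in `[θ₁, θ₂]` for all time. -/
theorem network_layer_two_sided_invariance
    {E N K : Type*} [Fintype E] [Fintype K] [DecidableEq N]
    (σ τ : E → N) (ν : K → N)
    (Ve : E → ℝ) (hVe : ∀ e, 0 < Ve e)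
    (Vn : N → ℝ) (hVn : ∀ n, 0 < Vn n)
    (q : E → ℝ → ℝ) (hq : ∀ e, ∀ t ≥ (0:ℝ), 0 ≤ q e t)
    (r : K → ℝ → ℝ) (hr : ∀ k, ∀ t ≥ (0:ℝ), 0 ≤ r k t)
    (θ₁ θ₂ : ℝ) (hθ : θ₁ ≤ θ₂)
    (S : K → ℝ → ℝ) (hS : ∀ k, ∀ t ≥ (0:ℝ), θ₁ ≤ S k t ∧ S k t ≤ θ₂)
    (Te : E → ℝ → ℝ) (Tn : N → ℝ → ℝ)
    (hTeDiff : ∀ e, ∀ t ≥ (0:ℝ), DifferentiableAt ℝ (Te e) t)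
    (hTnDiff : ∀ n, ∀ t ≥ (0:ℝ), DifferentiableAt ℝ (Tn n) t)
    (hodeE : ∀ e, ∀ t ≥ (0:ℝ),
      Ve e * deriv (Te e) t = q e t * (Tn (σ e) t - Te e t))
    (hodeN : ∀ n, ∀ t ≥ (0:ℝ),
      Vn n * deriv (Tn n) t
        = (∑ e ∈ Finset.univ.filter (fun e => τ e = n), q e t * (Te e t - Tn n t))
          + (∑ k ∈ Finset.univ.filter (fun k => ν k = n), r k t * (S k t - Tn n t)))
    (h0E : ∀ e, θ₁ ≤ Te e 0 ∧ Te e 0 ≤ θ₂)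
    (h0N : ∀ n, θ₁ ≤ Tn n 0 ∧ Tn n 0 ≤ θ₂) :
    ∀ t ≥ (0:ℝ),
      (∀ e, θ₁ ≤ Te e t ∧ Te e t ≤ θ₂) ∧ (∀ n, θ₁ ≤ Tn n t ∧ Tn n t ≤ θ₂) := by
  intro t ht
  let G : ThermalNetwork E N K := ⟨σ, τ, ν, Ve, hVe, Vn, hVn, q, hq, r, hr⟩
  have hT : G.IsSolution S Te Tn := ⟨hTeDiff, hTnDiff, hodeE, hodeN⟩
  obtain ⟨hTe_ge, hTn_ge⟩ := hT.ge_of_initial_ge (fun k s hs ↦ (hS k s hs).1)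
    (fun e ↦ (h0E e).1) (fun n ↦ (h0N n).1) ht
  obtain ⟨hTe_le, hTn_le⟩ := hT.le_of_initial_le (fun k s hs ↦ (hS k s hs).2)
    (fun e ↦ (h0E e).2) (fun n ↦ (h0N n).2) ht
  exact ⟨fun e ↦ ⟨hTe_ge e, hTe_le e⟩, fun n ↦ ⟨hTn_ge n, hTn_le n⟩⟩
end

section
/- Let V > 0, ε > 0, Z > 0, ω, T* and P be real constants with P ≥ 0 and ω ≥ 1/V + Z/(4·V²·ε). Let T_in : [0,∞) → ℝ satisfy T_in(t) − T* ≥ ε for all t ≥ 0, and let z : [0,∞) → ℝ satisfy z'(t) = −z(t) + P and 0 < z(t) ≤ Z for all t ≥ 0. Let T : [0,∞) → ℝ be differentiable with V · T'(t) = −((T(t) − T*)/(T_in(t) − T*))·z(t) + (z(t) − P) for all t ≥ 0. Then the function W(t) := (1/2)·( V·(T(t) − T*)² + 2·(T(t) − T*)·(z(t) − P) + ω·(z(t) − P)² ) is nonincreasing on [0,∞). -/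
/-!
In the deviations `x = T - T*` and `y = z - P` the closed loop is the linear cascade
`V x' = -a x + y`, `y' = -y` with time-varying gain `a = z / (T_in - T*) ∈ [0, Z / ε]`.
The cross term of `W` cancels the input `y` in `V x x'`, and completing the square gives
`W' = -(a (x + y / (2 V))² + (ω - 1 / V - a / (4 V²)) y²)`,
so the bound on `ω` is exactly nonnegativity of the last coefficient at the largest gain.
-/

/-- The Lyapunov function candidate `W` of the cascade `V x' = -a x + y`, `y' = -y`, as a
quadratic form in the state `(x, y)`. -/
noncomputable def cascadeLyapunov (V ω x y : ℝ) : ℝ :=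
  (1 / 2) * (V * x ^ 2 + 2 * x * y + ω * y ^ 2)

section Cascade

variable {V ω : ℝ}

theorem hasDerivWithinAt_cascadeLyapunov {x y : ℝ → ℝ} {x' y' t : ℝ} {s : Set ℝ}
    (hx : HasDerivWithinAt x x' s t) (hy : HasDerivWithinAt y y' s t) :
    HasDerivWithinAt (fun τ => cascadeLyapunov V ω (x τ) (y τ))
      ((V * x t + y t) * x' + (x t + ω * y t) * y') s t := by
  have hW := ((((hx.pow 2).const_mul V).add ((hx.const_mul 2).mul hy)).add
    ((hy.pow 2).const_mul ω)).const_mul (1 / 2)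
  exact hW.congr_deriv (by norm_num; ring)

theorem cascadeLyapunov_rate_eq {a x y x' : ℝ} (hV : V ≠ 0) (hx' : V * x' = -a * x + y) :
    (V * x + y) * x' + (x + ω * y) * -y =
      -(a * (x + y / (2 * V)) ^ 2 + (ω - (1 / V + a / (4 * V ^ 2))) * y ^ 2) := by
  obtain rfl : x' = (-a * x + y) / V := eq_div_of_mul_eq hV (by rw [mul_comm, hx'])
  field_simp
  ring

theorem cascadeLyapunov_rate_nonpos {a x y x' : ℝ} (hV : V ≠ 0) (ha : 0 ≤ a)
    (hω : 1 / V + a / (4 * V ^ 2) ≤ ω) (hx' : V * x' = -a * x + y) :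
    (V * x + y) * x' + (x + ω * y) * -y ≤ 0 := by
  rw [cascadeLyapunov_rate_eq hV hx', neg_nonpos]
  exact add_nonneg (mul_nonneg ha (sq_nonneg _)) (mul_nonneg (sub_nonneg.mpr hω) (sq_nonneg _))

theorem antitoneOn_cascadeLyapunov {a x y x' : ℝ → ℝ} {s : Set ℝ} (hV : V ≠ 0)
    (hs : Convex ℝ s) (ha : ∀ t ∈ s, 0 ≤ a t)
    (hω : ∀ t ∈ s, 1 / V + a t / (4 * V ^ 2) ≤ ω)
    (hx : ∀ t ∈ s, HasDerivWithinAt x (x' t) s t)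
    (hx' : ∀ t ∈ s, V * x' t = -a t * x t + y t)
    (hy : ∀ t ∈ s, HasDerivWithinAt y (-y t) s t) :
    AntitoneOn (fun t => cascadeLyapunov V ω (x t) (y t)) s := by
  have hW := fun t ht => hasDerivWithinAt_cascadeLyapunov (V := V) (ω := ω) (hx t ht) (hy t ht)
  refine antitoneOn_of_hasDerivWithinAt_nonpos hs (fun t ht => (hW t ht).continuousWithinAt)
    (fun t ht => (hW t (interior_subset ht)).mono interior_subset) fun t ht => ?_
  have hts := interior_subset ht
  exact cascadeLyapunov_rate_nonpos hV (ha t hts) (hω t hts) (hx' t hts)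

end Cascade

theorem consumer_lyapunov_nonincreasing_general {V ε Z ω Tstar P : ℝ} {s : Set ℝ}
    {Tin z T T' : ℝ → ℝ} (hs : Convex ℝ s) (hV : V ≠ 0) (hε : 0 < ε)
    (hω : 1 / V + Z / (4 * V ^ 2 * ε) ≤ ω)
    (hTin : ∀ t ∈ s, ε ≤ Tin t - Tstar)
    (hz : ∀ t ∈ s, HasDerivWithinAt z (-z t + P) s t)
    (hz_nonneg : ∀ t ∈ s, 0 ≤ z t) (hz_le : ∀ t ∈ s, z t ≤ Z)
    (hT : ∀ t ∈ s, HasDerivWithinAt T (T' t) s t)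
    (hode : ∀ t ∈ s, V * T' t = -((T t - Tstar) / (Tin t - Tstar)) * z t + (z t - P)) :
    AntitoneOn (fun t => cascadeLyapunov V ω (T t - Tstar) (z t - P)) s := by
  have hgap : ∀ t ∈ s, 0 < Tin t - Tstar := fun t ht => hε.trans_le (hTin t ht)
  have hgain_le : ∀ t ∈ s, z t / (Tin t - Tstar) ≤ Z / ε := fun t ht =>
    div_le_div₀ ((hz_nonneg t ht).trans (hz_le t ht)) (hz_le t ht) hε (hTin t ht)
  refine antitoneOn_cascadeLyapunov (a := fun t => z t / (Tin t - Tstar)) hV hs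
    (fun t ht => div_nonneg (hz_nonneg t ht) (hgap t ht).le) (fun t ht => ?_)
    (fun t ht => (hT t ht).sub_const Tstar) (fun t ht => ?_)
    (fun t ht => ((hz t ht).sub_const P).congr_deriv (by ring))
  · calc 1 / V + z t / (Tin t - Tstar) / (4 * V ^ 2)
        ≤ 1 / V + Z / ε / (4 * V ^ 2) := by
          gcongr 1 / V + ?_ / (4 * V ^ 2)
          exact hgain_le t ht
      _ = 1 / V + Z / (4 * V ^ 2 * ε) := by rw [div_div, mul_comm ε]
      _ ≤ ω := hω
  · rw [hode t ht]
    ring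

/-- Lyapunov-decrease claim in the proof of Proposition 5: along the closed-loop
consumer dynamics, the quadratic form
`W(t) = (1/2)(V (T−T*)² + 2 (T−T*)(z−P) + ω (z−P)²)` is nonincreasing. -/
theorem consumer_lyapunov_nonincreasing
    (V ε Z ω Tstar P : ℝ)
    (hV : 0 < V) (hε : 0 < ε) (hZ : 0 < Z) (hP : 0 ≤ P)
    (hω : 1 / V + Z / (4 * V^2 * ε) ≤ ω)
    (Tin : ℝ → ℝ) (hTin : ∀ t ≥ (0:ℝ), ε ≤ Tin t - Tstar)
    (z : ℝ → ℝ)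
    (hz : ∀ t ≥ (0:ℝ), HasDerivAt z (-z t + P) t)
    (hzbnd : ∀ t ≥ (0:ℝ), 0 < z t ∧ z t ≤ Z)
    (T : ℝ → ℝ)
    (hdiff : ∀ t ≥ (0:ℝ), DifferentiableAt ℝ T t)
    (hode : ∀ t ≥ (0:ℝ),
      V * deriv T t = -((T t - Tstar) / (Tin t - Tstar)) * z t + (z t - P)) :
    AntitoneOn
      (fun t => (1/2) * (V * (T t - Tstar)^2
        + 2 * (T t - Tstar) * (z t - P) + ω * (z t - P)^2))
      (Set.Ici (0:ℝ)) :=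
  consumer_lyapunov_nonincreasing_general (convex_Ici 0) hV.ne' hε hω hTin
    (fun t ht => (hz t ht).hasDerivWithinAt) (fun t ht => (hzbnd t ht).1.le)
    (fun t ht => (hzbnd t ht).2) (fun t ht => (hdiff t ht).hasDerivAt.hasDerivWithinAt) hode
end

section
/- Let V*, C and κ > 0 be real constants and q : [0,∞) → ℝ a function with q(t) ≥ 0 for all t ≥ 0. Let V_sh : [0,∞) → ℝ be differentiable and satisfy, for all t ≥ 0: V_sh'(t) = −κ·(V_sh(t) − V*) whenever V_sh(t) ≤ V*, and V_sh'(t) = −(1 − exp(−(V_sh(t) − V*)))·q(t) whenever V_sh(t) > V*, and let V_sc : [0,∞) → ℝ satisfy V_sh(t) + V_sc(t) = C for all t ≥ 0. Then |V_sc(t) − (C − V*)| ≤ |V_sc(0) − (C − V*)| for all t ≥ 0; moreover, if q is continuous and q(t) ≥ c for all t ≥ 0 for some c > 0, then V_sc(t) → C − V* as t → ∞. -/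
open Filter

/-!
The squared distance of the hot-layer volume `x` to its setpoint `a` is a Lyapunov function. With
`r = |x - a|` and `q ≥ c`, both branches of the dynamics give
`(x - a) * x' ≤ -r * min (κ * r) ((1 - exp (-r)) * c)`. For `c = 0` the right-hand side is zero, so
the distance never increases. For `c > 0` it is a negative decreasing function of `r > 0`; as long
as the distance stays above some `ε > 0`, its square falls at a rate bounded away from zero, which a
nonnegative quantity cannot do forever. The cold layer is the reflection of the hot one in a full
tank.
-/

open Set Topology

section Lyapunov

variable {V V' : ℝ → ℝ} {t₀ : ℝ}

theorem antitoneOn_of_forall_hasDerivWithinAt_nonpos {s : Set ℝ} (hs : Convex ℝ s)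
    (hV : ∀ t ∈ s, HasDerivWithinAt V (V' t) s t) (hV' : ∀ t ∈ s, V' t ≤ 0) :
    AntitoneOn V s :=
  antitoneOn_of_hasDerivWithinAt_nonpos hs (HasDerivWithinAt.continuousOn hV)
    (fun t ht => (hV t (interior_subset ht)).mono interior_subset)
    (fun t ht => hV' t (interior_subset ht))

theorem tendsto_atBot_of_hasDerivWithinAt_le_neg {δ : ℝ} (hδ : 0 < δ)
    (hV : ∀ t ∈ Ici t₀, HasDerivWithinAt V (V' t) (Ici t₀) t) (hV' : ∀ t ∈ Ici t₀, V' t ≤ -δ) :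
    Tendsto V atTop atBot := by
  have hanti : AntitoneOn (fun t => V t + δ * t) (Ici t₀) :=
    antitoneOn_of_forall_hasDerivWithinAt_nonpos (convex_Ici t₀)
      (fun t ht => (hV t ht).add ((hasDerivWithinAt_id t _).const_mul δ))
      (fun t ht => by linarith [hV' t ht])
  have hbound : ∀ᶠ t in atTop, V t ≤ V t₀ + δ * t₀ + -δ * t := by
    filter_upwards [eventually_ge_atTop t₀] with t ht
    linarith [hanti self_mem_Ici ht ht]
  exact tendsto_atBot_mono' atTop hbound <|
    tendsto_atBot_add_const_left _ _ (tendsto_id.const_mul_atTop_of_neg (neg_neg_of_pos hδ))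

theorem tendsto_zero_of_hasDerivWithinAt_le_neg_comp {ψ : ℝ → ℝ} (hψ : MonotoneOn ψ (Ici 0))
    (hψ_zero : 0 ≤ ψ 0) (hψ_pos : ∀ v > 0, 0 < ψ v)
    (hV : ∀ t ∈ Ici t₀, HasDerivWithinAt V (V' t) (Ici t₀) t) (hV_nonneg : ∀ t ∈ Ici t₀, 0 ≤ V t)
    (hV' : ∀ t ∈ Ici t₀, V' t ≤ -ψ (V t)) :
    Tendsto V atTop (𝓝 0) := by
  have hanti : AntitoneOn V (Ici t₀) :=
    antitoneOn_of_forall_hasDerivWithinAt_nonpos (convex_Ici t₀) hV fun t ht =>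
      (hV' t ht).trans <| neg_nonpos.2 <|
        hψ_zero.trans (hψ self_mem_Ici (hV_nonneg t ht) (hV_nonneg t ht))
  have hsmall : ∀ ε > 0, ∃ s ≥ t₀, V s < ε := by
    intro ε hε
    by_contra! hge
    have hbot : Tendsto V atTop atBot :=
      tendsto_atBot_of_hasDerivWithinAt_le_neg (hψ_pos ε hε) hV fun t ht =>
        (hV' t ht).trans (neg_le_neg (hψ hε.le (hV_nonneg t ht) (hge t ht)))
    obtain ⟨t, hneg, ht⟩ := ((hbot.eventually_lt_atBot 0).and (eventually_ge_atTop t₀)).exists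
    exact hneg.not_ge (hV_nonneg t ht)
  refine tendsto_order.2 ⟨fun b hb => ?_, fun ε hε => ?_⟩
  · filter_upwards [eventually_ge_atTop t₀] with t ht using hb.trans_le (hV_nonneg t ht)
  · obtain ⟨s, hs, hsε⟩ := hsmall ε hε
    filter_upwards [eventually_ge_atTop s] with t ht
    exact (hanti hs (hs.trans ht) ht).trans_lt hsε

end Lyapunov

section DistanceToEquilibrium

variable {E : Type*} [NormedAddCommGroup E] [InnerProductSpace ℝ E] {x x' : ℝ → E} {a : E}

theorem antitoneOn_norm_sub_of_inner_nonpos {s : Set ℝ} (hs : Convex ℝ s)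
    (hx : ∀ t ∈ s, HasDerivWithinAt x (x' t) s t)
    (hinner : ∀ t ∈ s, inner ℝ (x t - a) (x' t) ≤ 0) :
    AntitoneOn (fun t => ‖x t - a‖) s := by
  have hsq : AntitoneOn (fun t => ‖x t - a‖ ^ 2) s :=
    antitoneOn_of_forall_hasDerivWithinAt_nonpos hs
      (fun t ht => ((hx t ht).sub_const a).norm_sq) (fun t ht => by linarith [hinner t ht])
  exact fun t ht u hu htu => le_of_sq_le_sq (hsq ht hu htu) (norm_nonneg _)

theorem tendsto_of_inner_le_neg_comp_norm_sub {φ : ℝ → ℝ} {t₀ : ℝ} (hφ : MonotoneOn φ (Ici 0))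
    (hφ_zero : 0 ≤ φ 0) (hφ_pos : ∀ r > 0, 0 < φ r)
    (hx : ∀ t ∈ Ici t₀, HasDerivWithinAt x (x' t) (Ici t₀) t)
    (hinner : ∀ t ∈ Ici t₀, inner ℝ (x t - a) (x' t) ≤ -φ ‖x t - a‖) :
    Tendsto x atTop (𝓝 a) := by
  have hsq : Tendsto (fun t => ‖x t - a‖ ^ 2) atTop (𝓝 0) := by
    refine tendsto_zero_of_hasDerivWithinAt_le_neg_comp (ψ := fun v => 2 * φ √v) ?_ ?_ ?_
      (fun t ht => ((hx t ht).sub_const a).norm_sq) (fun t _ => sq_nonneg _) ?_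
    · intro v _ w _ hvw
      exact mul_le_mul_of_nonneg_left
        (hφ (Real.sqrt_nonneg v) (Real.sqrt_nonneg w) (Real.sqrt_le_sqrt hvw)) zero_le_two
    · simpa using hφ_zero
    · exact fun v hv => mul_pos two_pos (hφ_pos _ (Real.sqrt_pos.2 hv))
    · intro t ht
      simp only [Real.sqrt_sq (norm_nonneg _)]
      linarith [hinner t ht]
  rw [tendsto_iff_norm_sub_tendsto_zero]
  simpa using hsq.sqrt

end DistanceToEquilibrium

/-- A lower bound for the rate at which half the squared deviation of the hot-layer volume from its
setpoint decreases, when that deviation has absolute value `r`, the controller gain is `κ` and the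
outgoing flow is at least `c`. The minimum merges the branches below and above the setpoint. -/
noncomputable def hotLayerDissipation (κ c r : ℝ) : ℝ :=
  r * min (κ * r) ((1 - Real.exp (-r)) * c)

section HotLayerDissipation

variable {κ c r : ℝ}

theorem hotLayerDissipation_zero_right : hotLayerDissipation κ c 0 = 0 :=
  zero_mul _

theorem hotLayerDissipation_zero_flow (hκ : 0 ≤ κ) (hr : 0 ≤ r) :
    hotLayerDissipation κ 0 r = 0 := by
  simp [hotLayerDissipation, mul_nonneg hκ hr]

theorem hotLayerDissipation_pos (hκ : 0 < κ) (hc : 0 < c) (hr : 0 < r) :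
    0 < hotLayerDissipation κ c r := by
  have hexp : Real.exp (-r) < 1 := Real.exp_lt_one_iff.2 (neg_neg_of_pos hr)
  exact mul_pos hr (lt_min (mul_pos hκ hr) (mul_pos (sub_pos.2 hexp) hc))

theorem monotoneOn_hotLayerDissipation (hκ : 0 ≤ κ) (hc : 0 ≤ c) :
    MonotoneOn (hotLayerDissipation κ c) (Ici 0) := by
  intro r (hr : 0 ≤ r) s (hs : 0 ≤ s) hrs
  have hexp : Real.exp (-r) ≤ 1 := Real.exp_le_one_iff.2 (neg_nonpos.2 hr)
  have hmin_nonneg : 0 ≤ min (κ * r) ((1 - Real.exp (-r)) * c) :=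
    le_min (mul_nonneg hκ hr) (mul_nonneg (sub_nonneg.2 hexp) hc)
  have hmin_le : min (κ * r) ((1 - Real.exp (-r)) * c) ≤ min (κ * s) ((1 - Real.exp (-s)) * c) := by
    gcongr
  exact mul_le_mul hrs hmin_le hmin_nonneg hs

theorem mul_le_neg_hotLayerDissipation {q x x' : ℝ} (hbelow : x ≤ 0 → x' = -κ * x)
    (habove : 0 < x → x' = -(1 - Real.exp (-x)) * q) (hcq : c ≤ q) :
    x * x' ≤ -hotLayerDissipation κ c |x| := by
  unfold hotLayerDissipation
  rcases le_or_gt x 0 with hx | hx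
  · calc x * x' = -(|x| * (κ * |x|)) := by rw [hbelow hx, abs_of_nonpos hx]; ring
      _ ≤ _ := by gcongr; exact min_le_left _ _
  · have hexp : 0 ≤ 1 - Real.exp (-|x|) :=
      sub_nonneg.2 (Real.exp_le_one_iff.2 (neg_nonpos.2 (abs_nonneg x)))
    calc x * x' = -(|x| * ((1 - Real.exp (-|x|)) * q)) := by
          rw [habove hx, abs_of_pos hx]; ring
      _ ≤ -(|x| * ((1 - Real.exp (-|x|)) * c)) := by gcongr
      _ ≤ _ := by gcongr; exact min_le_right _ _

end HotLayerDissipation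

section HotLayerDynamics

variable {Vstar κ t₀ : ℝ} {q Vsh Vsh' : ℝ → ℝ}

theorem antitoneOn_abs_hotLayerVolume_sub (hκ : 0 ≤ κ) (hq : ∀ t ∈ Ici t₀, 0 ≤ q t)
    (hderiv : ∀ t ∈ Ici t₀, HasDerivWithinAt Vsh (Vsh' t) (Ici t₀) t)
    (hbelow : ∀ t ∈ Ici t₀, Vsh t ≤ Vstar → Vsh' t = -κ * (Vsh t - Vstar))
    (habove : ∀ t ∈ Ici t₀, Vstar < Vsh t →
      Vsh' t = -(1 - Real.exp (-(Vsh t - Vstar))) * q t) :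
    AntitoneOn (fun t => |Vsh t - Vstar|) (Ici t₀) := by
  refine antitoneOn_norm_sub_of_inner_nonpos (convex_Ici t₀) hderiv fun t ht => ?_
  have hdiss := mul_le_neg_hotLayerDissipation (fun h => hbelow t ht (sub_nonpos.1 h))
    (fun h => habove t ht (sub_pos.1 h)) (hq t ht)
  rw [hotLayerDissipation_zero_flow hκ (abs_nonneg _), neg_zero] at hdiss
  rwa [RCLike.inner_apply', conj_trivial]

theorem tendsto_hotLayerVolume (hκ : 0 < κ) {c : ℝ} (hc : 0 < c) (hcq : ∀ t ∈ Ici t₀, c ≤ q t)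
    (hderiv : ∀ t ∈ Ici t₀, HasDerivWithinAt Vsh (Vsh' t) (Ici t₀) t)
    (hbelow : ∀ t ∈ Ici t₀, Vsh t ≤ Vstar → Vsh' t = -κ * (Vsh t - Vstar))
    (habove : ∀ t ∈ Ici t₀, Vstar < Vsh t →
      Vsh' t = -(1 - Real.exp (-(Vsh t - Vstar))) * q t) :
    Tendsto Vsh atTop (𝓝 Vstar) := by
  refine tendsto_of_inner_le_neg_comp_norm_sub (monotoneOn_hotLayerDissipation hκ.le hc.le)
    hotLayerDissipation_zero_right.ge (fun r => hotLayerDissipation_pos hκ hc) hderiv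
    fun t ht => ?_
  rw [RCLike.inner_apply', conj_trivial]
  exact mul_le_neg_hotLayerDissipation (fun h => hbelow t ht (sub_nonpos.1 h))
    (fun h => habove t ht (sub_pos.1 h)) (hcq t ht)

end HotLayerDynamics

theorem cold_storage_volume_stability_general {Vstar C κ : ℝ} (hκ : 0 < κ)
    {q : ℝ → ℝ} (hq : ∀ t ≥ 0, 0 ≤ q t) {Vsh Vsh' Vsc : ℝ → ℝ}
    (hderiv : ∀ t ≥ 0, HasDerivWithinAt Vsh (Vsh' t) (Ici 0) t)
    (hbelow : ∀ t ≥ 0, Vsh t ≤ Vstar → Vsh' t = -κ * (Vsh t - Vstar))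
    (habove : ∀ t ≥ 0, Vstar < Vsh t → Vsh' t = -(1 - Real.exp (-(Vsh t - Vstar))) * q t)
    (hfull : ∀ t ≥ 0, Vsh t + Vsc t = C) :
    (∀ t ≥ 0, |Vsc t - (C - Vstar)| ≤ |Vsc 0 - (C - Vstar)|) ∧
    ((∃ c > 0, ∀ᶠ t in atTop, c ≤ q t) → Tendsto Vsc atTop (𝓝 (C - Vstar))) := by
  have hcold : ∀ t ≥ 0, Vsc t = C - Vsh t := fun t ht => eq_sub_of_add_eq' (hfull t ht)
  refine ⟨fun t ht => ?_, ?_⟩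
  · have hanti := antitoneOn_abs_hotLayerVolume_sub hκ.le hq hderiv hbelow habove
    simpa only [hcold t ht, hcold 0 le_rfl, sub_sub_sub_cancel_left, abs_sub_comm Vstar]
      using hanti self_mem_Ici ht ht
  · rintro ⟨c, hc, hcq⟩
    obtain ⟨t₀, ht₀, hcq₀⟩ := (atTop_basis' 0).eventually_iff.1 hcq
    have hnonneg : ∀ t ∈ Ici t₀, 0 ≤ t := fun t ht => ht₀.trans ht
    have hhot : Tendsto Vsh atTop (𝓝 Vstar) :=
      tendsto_hotLayerVolume hκ hc (fun t ht => hcq₀ ht)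
        (fun t ht => (hderiv t (hnonneg t ht)).mono hnonneg)
        (fun t ht => hbelow t (hnonneg t ht)) (fun t ht => habove t (hnonneg t ht))
    exact (hhot.const_sub C).congr' <| (eventually_ge_atTop 0).mono fun t ht => (hcold t ht).symm

/-- Volume part of Proposition 7: since the tank is always full,
`V_sh + V_sc = C`; the cold-layer volume inherits Lyapunov stability at
`C − V*` and, when the outgoing flow is uniformly positive, converges to it. -/
theorem cold_storage_volume_stability
    (Vstar C κ : ℝ) (hκ : 0 < κ)
    (q : ℝ → ℝ) (hq : ∀ t ≥ (0:ℝ), 0 ≤ q t)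
    (Vsh Vsc : ℝ → ℝ)
    (hdiff : ∀ t ≥ (0:ℝ), DifferentiableAt ℝ Vsh t)
    (hode1 : ∀ t ≥ (0:ℝ), Vsh t ≤ Vstar → deriv Vsh t = -κ * (Vsh t - Vstar))
    (hode2 : ∀ t ≥ (0:ℝ), Vstar < Vsh t →
      deriv Vsh t = -(1 - Real.exp (-(Vsh t - Vstar))) * q t)
    (hfull : ∀ t ≥ (0:ℝ), Vsh t + Vsc t = C) :
    (∀ t ≥ (0:ℝ), |Vsc t - (C - Vstar)| ≤ |Vsc 0 - (C - Vstar)|) ∧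
    (ContinuousOn q (Set.Ici (0:ℝ)) →
      (∃ c > (0:ℝ), ∀ t ≥ (0:ℝ), c ≤ q t) →
      Tendsto Vsc atTop (nhds (C - Vstar))) :=
  (cold_storage_volume_stability_general hκ hq
    (fun t ht => (hdiff t ht).hasDerivAt.hasDerivWithinAt) hode1 hode2 hfull).imp_right
    fun hconv _ ⟨c, hc, hcq⟩ => hconv ⟨c, hc, (eventually_ge_atTop 0).mono hcq⟩
end

section
/- Let V_p > 0, k > 0, c > 0, V_max > 0 and T* be real constants. Let T_p : [0,∞) → ℝ be differentiable with V_p · T_p'(t) = −k·(T_p(t) − T*) for all t ≥ 0. Let q : [0,∞) → ℝ be continuous with q(t) ≥ c for all t ≥ 0, let V : [0,∞) → ℝ be continuous with 0 < V(t) ≤ V_max for all t ≥ 0, and let T_sh : [0,∞) → ℝ be differentiable with V(t) · T_sh'(t) = q(t) · (T_p(t) − T_sh(t)) for all t ≥ 0. Then T_p(t) → T* and T_sh(t) → T* as t → ∞. -/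
open Filter

/-!
Both equations have the form `y' = a • (u - y)` with a rate `a` bounded below by some `α > 0` and an
input `u` that tends to `L`. Over a short time `h` the state moves to the convex combination
`(1 - h * a) • y + (h * a) • u`, so `‖y‖` grows at rate at most `a * (‖u‖ - ‖y‖)`. While `‖u‖ < M`,
the curve `M + K * exp (-α * t)` is therefore a fence which `‖y‖` cannot cross; applied to `y - L`
and `u - L`, with `M` arbitrarily small, this gives `y → L`. The producer is the case of constant
input `T*`, and its output is the input of the tank.
-/

section FirstOrderLag

open Set Topology

variable {E : Type*} [NormedAddCommGroup E] [NormedSpace ℝ E]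

theorem eventually_slope_norm_lt_of_hasDerivWithinAt_smul_sub {y : ℝ → E} {u : E} {a t r : ℝ}
    (ha : 0 ≤ a) (hy : HasDerivWithinAt y (a • (u - y t)) (Ici t) t)
    (hr : a * (‖u‖ - ‖y t‖) < r) :
    ∀ᶠ s in 𝓝[>] t, slope (fun τ => ‖y τ‖) t s < r := by
  let g : ℝ → E := fun s => y s - (1 - a * (s - t)) • y t
  have hg : HasDerivWithinAt g (a • u) (Ioi t) t := by
    have hcoeff : HasDerivAt (fun s => 1 - a * (s - t)) (-(a * 1)) t :=
      (((hasDerivAt_id t).sub_const t).const_mul a).const_sub 1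
    refine ((hy.mono Ioi_subset_Ici_self).sub
      (hcoeff.smul_const (y t)).hasDerivWithinAt).congr_deriv ?_
    module
  have hgt : g t = 0 := by simp [g]
  have hgr : ‖a • u‖ < r + a * ‖y t‖ := by
    rw [norm_smul, Real.norm_of_nonneg ha]
    linarith
  have hcoeff_pos : ∀ᶠ s in 𝓝[>] t, 0 < 1 - a * (s - t) := by
    have hcont : ContinuousAt (fun s => 1 - a * (s - t)) t := by fun_prop
    exact (hcont.eventually_const_lt (by simp)).filter_mono nhdsWithin_le_nhds
  filter_upwards [hg.limsup_norm_slope_le hgr, hcoeff_pos, self_mem_nhdsWithin] with s hgs hcs hts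
  have hst : 0 < s - t := sub_pos.2 hts
  have hgs' : ‖g s‖ < (s - t) * (r + a * ‖y t‖) := by
    rwa [hgt, sub_zero, Real.norm_of_nonneg hst.le, inv_mul_lt_iff₀ hst] at hgs
  have hys : ‖y s‖ ≤ ‖g s‖ + (1 - a * (s - t)) * ‖y t‖ :=
    calc ‖y s‖ = ‖g s + (1 - a * (s - t)) • y t‖ := by simp [g]
      _ ≤ ‖g s‖ + ‖(1 - a * (s - t)) • y t‖ := norm_add_le _ _
      _ = ‖g s‖ + (1 - a * (s - t)) * ‖y t‖ := by rw [norm_smul, Real.norm_of_nonneg hcs.le]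
  rw [slope_def_field, div_lt_iff₀ hst]
  linarith

theorem norm_le_add_mul_exp_of_hasDerivWithinAt_smul_sub {y u : ℝ → E} {a : ℝ → ℝ} {α M t₀ : ℝ}
    (hα : 0 < α) (hyc : ContinuousOn y (Ici t₀))
    (hy : ∀ t ≥ t₀, HasDerivWithinAt y (a t • (u t - y t)) (Ici t) t)
    (ha : ∀ t ≥ t₀, α ≤ a t) (hu : ∀ t ≥ t₀, ‖u t‖ < M) {t : ℝ} (ht : t₀ ≤ t) :
    ‖y t‖ ≤ M + ‖y t₀‖ * Real.exp (-α * (t - t₀)) := by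
  let decay : ℝ → ℝ := fun s => ‖y t₀‖ * Real.exp (-α * (s - t₀))
  have hdecay (s : ℝ) : HasDerivAt (fun s => M + decay s) (-α * decay s) s := by
    refine ((((((hasDerivAt_id s).sub_const t₀).const_mul (-α)).exp).const_mul
      ‖y t₀‖).const_add M).congr_deriv ?_
    simp only [decay, id]
    ring
  have hM : 0 ≤ M := (norm_nonneg _).trans (hu t₀ le_rfl).le
  refine image_le_of_liminf_slope_right_lt_deriv_boundary
    (f' := fun s => a s * (‖u s‖ - ‖y s‖)) (hyc.norm.mono Icc_subset_Ici_self)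
    (fun s hs r hr => ?_) (by simpa [decay] using hM) hdecay (fun s hs hfence => ?_) ⟨ht, le_rfl⟩
  · exact (eventually_slope_norm_lt_of_hasDerivWithinAt_smul_sub (hα.le.trans (ha s hs.1))
      (hy s hs.1) hr).frequently
  · have hdecay_nonneg : 0 ≤ decay s := by positivity
    calc a s * (‖u s‖ - ‖y s‖) < a s * -decay s :=
          mul_lt_mul_of_pos_left (by linarith [hu s hs.1]) (hα.trans_le (ha s hs.1))
      _ ≤ α * -decay s :=
          mul_le_mul_of_nonpos_right (ha s hs.1) (neg_nonpos.2 hdecay_nonneg)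
      _ = -α * decay s := by ring

theorem tendsto_mul_exp_neg_mul_sub_atTop {α : ℝ} (hα : 0 < α) (K t₀ : ℝ) :
    Tendsto (fun t => K * Real.exp (-α * (t - t₀))) atTop (𝓝 0) := by
  have hexponent : Tendsto (fun t => -α * (t - t₀)) atTop atBot :=
    (tendsto_atTop_add_const_right _ (-t₀) tendsto_id).const_mul_atTop_of_neg (neg_neg_of_pos hα)
  simpa using (Real.tendsto_exp_atBot.comp hexponent).const_mul K

theorem tendsto_of_hasDerivAt_smul_sub_s11 {y u : ℝ → E} {a : ℝ → ℝ} {α : ℝ} {L : E} (hα : 0 < α)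
    (hy : ∀ᶠ t in atTop, HasDerivAt y (a t • (u t - y t)) t)
    (ha : ∀ᶠ t in atTop, α ≤ a t) (hu : Tendsto u atTop (𝓝 L)) :
    Tendsto y atTop (𝓝 L) := by
  rw [Metric.tendsto_nhds]
  intro ε hε
  have hu_near : ∀ᶠ t in atTop, ‖u t - L‖ < ε / 2 := by
    simpa only [dist_eq_norm] using Metric.tendsto_nhds.1 hu (ε / 2) (half_pos hε)
  obtain ⟨t₀, ht₀⟩ := eventually_atTop.1 (hy.and (ha.and hu_near))
  have hderiv (t : ℝ) (ht : t ≥ t₀) :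
      HasDerivAt (fun s => y s - L) (a t • ((u t - L) - (y t - L))) t := by
    simpa only [sub_sub_sub_cancel_right] using (ht₀ t ht).1.sub_const L
  filter_upwards [eventually_ge_atTop t₀, (tendsto_mul_exp_neg_mul_sub_atTop hα ‖y t₀ - L‖
    t₀).eventually_lt_const (half_pos hε)] with t ht hdecay
  have hbound : ‖y t - L‖ ≤ ε / 2 + ‖y t₀ - L‖ * Real.exp (-α * (t - t₀)) :=
    norm_le_add_mul_exp_of_hasDerivWithinAt_smul_sub (u := fun s => u s - L) hα
      (fun s hs => (hderiv s hs).continuousAt.continuousWithinAt)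
      (fun s hs => (hderiv s hs).hasDerivWithinAt)
      (fun s hs => (ht₀ s hs).2.1) (fun s hs => (ht₀ s hs).2.2) ht
  rw [dist_eq_norm]
  linarith

theorem tendsto_of_smul_deriv_eq_smul_sub {y u : ℝ → E} {q V : ℝ → ℝ} {c Vmax : ℝ} {L : E}
    (hc : 0 < c) (hq : ∀ᶠ t in atTop, c ≤ q t) (hV : ∀ᶠ t in atTop, 0 < V t ∧ V t ≤ Vmax)
    (hy : ∀ᶠ t in atTop, DifferentiableAt ℝ y t)
    (hode : ∀ᶠ t in atTop, V t • deriv y t = q t • (u t - y t))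
    (hu : Tendsto u atTop (𝓝 L)) :
    Tendsto y atTop (𝓝 L) := by
  obtain ⟨t, hVpos, hVle⟩ := hV.exists
  have hrate : 0 < c / Vmax := div_pos hc (hVpos.trans_le hVle)
  refine tendsto_of_hasDerivAt_smul_sub_s11 (a := fun t => q t / V t) hrate ?_ ?_ hu
  · filter_upwards [hV, hy, hode] with t hVt hyt hodet
    refine hyt.hasDerivAt.congr_deriv ?_
    rw [div_eq_inv_mul, mul_smul, ← hodet, inv_smul_smul₀ hVt.1.ne']
  · filter_upwards [hq, hV] with t hqt hVt
    exact div_le_div₀ (hc.le.trans hqt) hqt hVt.1 hVt.2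

theorem producer_and_storage_temperature_convergence_general
    {Vp k c Vmax t₀ : ℝ} {Tstar : E} (hVp : 0 < Vp) (hk : 0 < k) (hc : 0 < c)
    {Tp : ℝ → E} (hTpDiff : ∀ t ≥ t₀, DifferentiableAt ℝ Tp t)
    (hTpOde : ∀ t ≥ t₀, Vp • deriv Tp t = -k • (Tp t - Tstar))
    {q : ℝ → ℝ} (hq : ∀ t ≥ t₀, c ≤ q t)
    {V : ℝ → ℝ} (hV : ∀ t ≥ t₀, 0 < V t ∧ V t ≤ Vmax)
    {Tsh : ℝ → E} (hTshDiff : ∀ t ≥ t₀, DifferentiableAt ℝ Tsh t)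
    (hTshOde : ∀ t ≥ t₀, V t • deriv Tsh t = q t • (Tp t - Tsh t)) :
    Tendsto Tp atTop (𝓝 Tstar) ∧ Tendsto Tsh atTop (𝓝 Tstar) := by
  have hlate := eventually_ge_atTop t₀
  have hTp : Tendsto Tp atTop (𝓝 Tstar) := by
    refine tendsto_of_smul_deriv_eq_smul_sub (q := fun _ => k) (V := fun _ => Vp)
      (u := fun _ => Tstar) hk (.of_forall fun _ => le_rfl) (.of_forall fun _ => ⟨hVp, le_rfl⟩)
      (hlate.mono hTpDiff) (hlate.mono fun t ht => ?_) tendsto_const_nhds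
    rw [hTpOde t ht, neg_smul, ← smul_neg, neg_sub]
  exact ⟨hTp, tendsto_of_smul_deriv_eq_smul_sub hc (hlate.mono hq) (hlate.mono hV)
    (hlate.mono hTshDiff) (hlate.mono hTshOde) hTp⟩

end FirstOrderLag

/-- Claim (I) of the main Theorem for one producer–tank pair: the producer
temperature (under `V_p T_p' = −k (T_p − T*)`) and the cascaded hot-storage
temperature (under `V T_sh' = q (T_p − T_sh)` with `q ≥ c > 0`,
`0 < V ≤ V_max`) both converge to the producer reference temperature `T*`. -/
theorem producer_and_storage_temperature_convergence
    (Vp k c Vmax Tstar : ℝ)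
    (hVp : 0 < Vp) (hk : 0 < k) (hc : 0 < c) (hVmax : 0 < Vmax)
    (Tp : ℝ → ℝ)
    (hTpDiff : ∀ t ≥ (0:ℝ), DifferentiableAt ℝ Tp t)
    (hTpOde : ∀ t ≥ (0:ℝ), Vp * deriv Tp t = -k * (Tp t - Tstar))
    (q : ℝ → ℝ) (hqcont : ContinuousOn q (Set.Ici (0:ℝ)))
    (hq : ∀ t ≥ (0:ℝ), c ≤ q t)
    (V : ℝ → ℝ) (hVcont : ContinuousOn V (Set.Ici (0:ℝ)))
    (hV : ∀ t ≥ (0:ℝ), 0 < V t ∧ V t ≤ Vmax)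
    (Tsh : ℝ → ℝ)
    (hTshDiff : ∀ t ≥ (0:ℝ), DifferentiableAt ℝ Tsh t)
    (hTshOde : ∀ t ≥ (0:ℝ), V t * deriv Tsh t = q t * (Tp t - Tsh t)) :
    Tendsto Tp atTop (nhds Tstar) ∧ Tendsto Tsh atTop (nhds Tstar) := by
  exact producer_and_storage_temperature_convergence_general hVp hk hc hTpDiff hTpOde hq hV
    hTshDiff hTshOde
end
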